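/- (Theorem 5.3: alternative form of the Harnack inequality.) Let d ≥ 3 and 0 < m < 1, and let p satisfy p = 1 if m > m_c and p > p_c if m ≤ m_c, where m_c = (d−2)/d, p_c = d(1−m)/2 and ϑ_p = 1/(2p − d(1−m)). There exist positive constants C₁, C₂ and h₂ depending only on m, d and p such that the following holds. Let u be a classical solution of the FDE ∂ₜu = Δ(u^m) on (0,T) × Ω taking nonnegative initial data u₀ ∈ L^p_loc(Ω) and having finite extinction time T, and let x₀ ∈ Ω, R > 0 with dist(x₀, ∂Ω) ≥ 6R. For t₀ ∈ [0, T) set t_*(t₀) = h₂ R^{2−d(1−m)} ‖u(t₀,·)‖_{L¹(B_R(x₀))}^{1−m} (with u(0,·) = u₀), and assume ‖u(t₀,·)‖_{L¹(B_R(x₀))} > 0. Then for all t, ϑ ≥ 0 with t₀ < t − ϑ and t + ϑ < t₀ + t_*(t₀): sup over x ∈ B_R(x₀) of u(t,x) is at most C₁ (t − t₀)^{−dϑ_p} ‖u(t₀,·)‖_{L^p(B_{2R}(x₀))}^{2pϑ_p} + C₂ ( ‖u(t₀,·)‖_{L^p(B_R(x₀))} R^d / ( ‖u(t₀,·)‖_{L¹(B_R(x₀))}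 R^{d/p} ) )^{1/m} · inf over x ∈ B_R(x₀) of u(t±ϑ, x) (for both choices of sign). -/

import Mathlib

open MeasureTheory Metric Set Real

/-- The spatial Laplacian of `f : ℝ^d → ℝ` at a point, as the sum of second
coordinate derivatives. -/
noncomputable def spaceLap {d : ℕ} (f : EuclideanSpace ℝ (Fin d) → ℝ)
    (x : EuclideanSpace ℝ (Fin d)) : ℝ :=
  ∑ i : Fin d, fderiv ℝ (fun y => fderiv ℝ f y (EuclideanSpace.single i 1)) x
    (EuclideanSpace.single i 1)

/-- `u` is a classical solution of the fast diffusion equation `∂ₜ u = Δ(u^m)`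
on the space-time set `Q`: it is positive and smooth on `Q` and satisfies the
equation pointwise on `Q`. -/
def IsFDESol {d : ℕ} (m : ℝ) (Q : Set (ℝ × EuclideanSpace ℝ (Fin d)))
    (u : ℝ → EuclideanSpace ℝ (Fin d) → ℝ) : Prop :=
  (∀ p ∈ Q, 0 < u p.1 p.2) ∧
  ContDiffOn ℝ (⊤ : ℕ∞) (fun p : ℝ × EuclideanSpace ℝ (Fin d) => u p.1 p.2) Q ∧
  ∀ p ∈ Q, deriv (fun s => u s p.2) p.1 = spaceLap (fun y => u p.1 y ^ m) p.2

/-- `u` (defined for `0 < t < T` on `Ω`) takes the initial data `u₀`: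
it extends continuously to `{0} × Ω` with value `u₀` there. -/
def TakesInit {d : ℕ} (T : ℝ) (Ω : Set (EuclideanSpace ℝ (Fin d)))
    (u : ℝ → EuclideanSpace ℝ (Fin d) → ℝ) (u₀ : EuclideanSpace ℝ (Fin d) → ℝ) : Prop :=
  ContinuousOn (fun p : ℝ × EuclideanSpace ℝ (Fin d) => u p.1 p.2) (Ico 0 T ×ˢ Ω) ∧
  ∀ x ∈ Ω, u 0 x = u₀ x

/-- `u` has finite extinction time `T` on `Ω`: it extends continuously to
`{T} × Ω` with value `0` there, while `u(t,·)` is not identically zero for `0 < t < T`. -/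
def ExtinctAt {d : ℕ} (T : ℝ) (Ω : Set (EuclideanSpace ℝ (Fin d)))
    (u : ℝ → EuclideanSpace ℝ (Fin d) → ℝ) : Prop :=
  ContinuousOn (fun p : ℝ × EuclideanSpace ℝ (Fin d) => u p.1 p.2) (Ioc 0 T ×ˢ Ω) ∧
  (∀ x ∈ Ω, u T x = 0) ∧
  ∀ t ∈ Ioo 0 T, ∃ x ∈ Ω, u t x ≠ 0


lemma det_lower {d : ℕ} (f : (ℝ × EuclideanSpace ℝ (Fin d)) →ₗ[ℝ] (ℝ × EuclideanSpace ℝ (Fin d)))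
    (h : ∀ y, (f (0, y)).1 = 0) :
    LinearMap.det f = (f (1, 0)).1 *
      Matrix.det (Matrix.of fun i j : Fin d => (f (0, EuclideanSpace.single j 1)).2 i) := by
  classical
  let b := (Module.Basis.singleton Unit ℝ).prod (EuclideanSpace.basisFun (Fin d) ℝ).toBasis
  have hm : LinearMap.toMatrix b b f = Matrix.fromBlocks (Matrix.of fun _ _ => (f (1, 0)).1) 0
      (Matrix.of fun i _ => (f (1, 0)).2 i)
      (Matrix.of fun i j : Fin d => (f (0, EuclideanSpace.single j 1)).2 i) := by
    ext i j
    rcases i with i | i <;> rcases j with j | j <;>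
      simp [LinearMap.toMatrix_apply, b, Module.Basis.prod_apply, h]
  rw [← LinearMap.det_toMatrix b, hm, Matrix.det_fromBlocks_zero₁₂]
  simp

lemma det_shear {d : ℕ} (l : EuclideanSpace ℝ (Fin d) →ₗ[ℝ] ℝ)
    (f : (ℝ × EuclideanSpace ℝ (Fin d)) →ₗ[ℝ] (ℝ × EuclideanSpace ℝ (Fin d)))
    (h : ∀ q, f q = (q.1 - l q.2, q.2)) :
    LinearMap.det f = 1 := by
  classical
  let b := (Module.Basis.singleton Unit ℝ).prod (EuclideanSpace.basisFun (Fin d) ℝ).toBasis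
  have hm : LinearMap.toMatrix b b f = Matrix.fromBlocks 1
      (Matrix.of fun _ j => - l (EuclideanSpace.single j 1)) 0 1 := by
    ext i j
    rcases i with i | i <;> rcases j with j | j <;>
      simp [LinearMap.toMatrix_apply, b, Module.Basis.prod_apply, h, Matrix.one_apply]
  rw [← LinearMap.det_toMatrix b, hm, Matrix.det_fromBlocks_zero₂₁]
  simp

lemma snd_deriv_le_zero {g : ℝ → ℝ} {x : ℝ} (hm : IsLocalMax g x) (hc : ContinuousAt g x) :
    deriv (deriv g) x ≤ 0 := by
  by_contra hlt
  push Not at hlt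
  have h1 := isLocalMin_of_deriv_deriv_pos hlt hm.deriv_eq_zero hc
  have h2 : g =ᶠ[nhds x] fun _ => g x := by
    filter_upwards [hm, h1] with y h3 h4
    exact le_antisymm h3 h4
  have h3 := h2.deriv.deriv_eq
  simp at h3
  linarith

lemma dd_line {F : Type*} [NormedAddCommGroup F] [NormedSpace ℝ F] {Z : F → ℝ} {q v : F}
    (hZ : ContDiffAt ℝ 2 Z q) :
    deriv (deriv fun s : ℝ => Z (q + s • v)) 0 = fderiv ℝ (fderiv ℝ Z) q v v := by
  have hl : ∀ s : ℝ, HasDerivAt (fun s : ℝ => q + s • v) v s := by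
    intro s
    simpa using ((hasDerivAt_id s).smul_const v).const_add q
  have hc : ContinuousAt (fun s : ℝ => q + s • v) 0 := (hl 0).continuousAt
  have h1 : ∀ᶠ y in nhds q, DifferentiableAt ℝ Z y := by
    have := hZ.eventually (by simp)
    filter_upwards [this] with y hy
    exact hy.differentiableAt (by simp)
  have h2 : (deriv fun s : ℝ => Z (q + s • v)) =ᶠ[nhds 0] fun s => fderiv ℝ Z (q + s • v) v := by
    have h1' : ∀ᶠ s : ℝ in nhds 0, DifferentiableAt ℝ Z (q + s • v) := by
      apply hc.eventually
      simpa using h1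
    filter_upwards [h1'] with s hs
    exact (hs.hasFDerivAt.comp_hasDerivAt s (hl s)).deriv
  rw [h2.deriv_eq]
  have h3 : DifferentiableAt ℝ (fderiv ℝ Z) (q + (0:ℝ) • v) := by
    simpa using (hZ.fderiv_right (m := 1) (by norm_num)).differentiableAt (by simp)
  have h4 : HasDerivAt (fun s : ℝ => fderiv ℝ Z (q + s • v)) (fderiv ℝ (fderiv ℝ Z) (q + (0:ℝ) • v) v) 0 :=
    h3.hasFDerivAt.comp_hasDerivAt (0:ℝ) (hl 0)
  have h5 : HasDerivAt (fun s : ℝ => fderiv ℝ Z (q + s • v) v)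
      (fderiv ℝ (fderiv ℝ Z) (q + (0:ℝ) • v) v v) 0 := by
    have := (ContinuousLinearMap.apply ℝ ℝ v).hasFDerivAt.comp_hasDerivAt (0:ℝ) h4
    exact this
  rw [h5.deriv, zero_smul, add_zero]

set_option maxHeartbeats 1000000 in
lemma contact {d : ℕ} {U : Set (ℝ × EuclideanSpace ℝ (Fin d))} (hU : IsOpen U)
    {Z : ℝ × EuclideanSpace ℝ (Fin d) → ℝ} (hZ : ContDiffOn ℝ 2 Z U)
    {t1 τ r : ℝ} {x1 : EuclideanSpace ℝ (Fin d)} (hr : 0 < r) (hτ : 0 < τ)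
    (hQ : Icc (t1 - τ) t1 ×ˢ closedBall x1 r ⊆ U)
    (hbot : ∀ x ∈ closedBall x1 r, Z (t1 - τ, x) ≤ 0)
    (hlat : ∀ t ∈ Icc (t1 - τ) t1, ∀ x, dist x x1 = r → Z (t, x) ≤ 0)
    {h : ℝ} (htop : h < Z (t1, x1))
    {ξ : EuclideanSpace ℝ (Fin d)} {δ : ℝ} (hδ : 0 < δ) (hξ : ‖ξ‖ * r + δ ≤ h) :
    ∃ q ∈ Icc (t1 - τ) t1 ×ˢ closedBall x1 r, δ ≤ Z q ∧ Z q - inner ℝ ξ (q.2 - x1) = h ∧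
      (∀ y : EuclideanSpace ℝ (Fin d), fderiv ℝ Z q (0, y) = inner ℝ ξ y) ∧
      0 ≤ fderiv ℝ Z q (1, 0) ∧
      ∀ y : EuclideanSpace ℝ (Fin d), fderiv ℝ (fderiv ℝ Z) q (0, y) (0, y) ≤ 0 := by
  set Q := Icc (t1 - τ) t1 ×ˢ closedBall x1 r with hQdef
  have hQc : IsCompact Q := isCompact_Icc.prod (isCompact_closedBall x1 r)
  set l : EuclideanSpace ℝ (Fin d) → ℝ := fun x => h + inner ℝ ξ (x - x1) with hl
  have hlc : Continuous l := by fun_prop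
  have hlpos : ∀ x ∈ closedBall x1 r, δ ≤ l x := by
    intro x hx
    have h1 : |inner ℝ ξ (x - x1)| ≤ ‖ξ‖ * ‖x - x1‖ := abs_real_inner_le_norm _ _
    have h2 : ‖x - x1‖ ≤ r := by simpa [dist_eq_norm] using hx
    have h3 : ‖ξ‖ * ‖x - x1‖ ≤ ‖ξ‖ * r := by gcongr
    have := (abs_le.1 h1).1
    simp only [hl]; linarith
  have hgc : ContinuousOn (fun q : ℝ × EuclideanSpace ℝ (Fin d) => Z q - l q.2) Q :=
    (hZ.continuousOn.mono hQ).sub (hlc.comp continuous_snd).continuousOn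
  set S := Q ∩ (fun q : ℝ × EuclideanSpace ℝ (Fin d) => Z q - l q.2) ⁻¹' Ici 0 with hS
  have hSc : IsCompact S :=
    hQc.of_isClosed_subset (hgc.preimage_isClosed_of_isClosed hQc.isClosed isClosed_Ici)
      inter_subset_left
  have hSne : S.Nonempty := by
    refine ⟨(t1, x1), ⟨Set.mk_mem_prod ⟨by simp [hτ.le], le_refl t1⟩ (mem_closedBall_self hr.le), ?_⟩⟩
    simp [hl, htop.le]
  obtain ⟨q, hqS, hqmin⟩ := hSc.exists_isMinOn hSne continuous_fst.continuousOn
  obtain ⟨t, x⟩ := q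
  have hqQ : (t, x) ∈ Q := hqS.1
  have hqge : 0 ≤ Z (t, x) - l x := hqS.2
  have ht : t ∈ Icc (t1 - τ) t1 := (Set.mem_prod.1 hqQ).1
  have hx : x ∈ closedBall x1 r := (Set.mem_prod.1 hqQ).2
  have hZpos : δ ≤ Z (t, x) := by linarith [hlpos x hx]
  have hxr : dist x x1 < r := by
    rcases lt_or_eq_of_le (show dist x x1 ≤ r from hx) with h' | h'
    · exact h'
    · linarith [hlat t ht x h']
  have htt : t1 - τ < t := by
    rcases lt_or_eq_of_le ht.1 with h' | h'
    · exact h'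
    · have := hbot x hx
      rw [h'] at this; linarith
  have hbefore : ∀ s ∈ Ico (t1 - τ) t, ∀ y ∈ closedBall x1 r, Z (s, y) < l y := by
    intro s hs y hy
    by_contra hcon
    push Not at hcon
    have : (s, y) ∈ S := ⟨Set.mk_mem_prod ⟨hs.1, hs.2.le.trans ht.2⟩ hy, by simpa using hcon⟩
    have := hqmin this
    simp at this
    linarith [hs.2]
  have hat : ∀ y ∈ closedBall x1 r, Z (t, y) ≤ l y := by
    intro y hy
    have hcz : ContinuousAt Z (t, y) := (hZ.contDiffAt (hU.mem_nhds (hQ (Set.mk_mem_prod ht hy)))).continuousAt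
    have hpc : Continuous (fun s : ℝ => ((s, y) : ℝ × EuclideanSpace ℝ (Fin d))) := by fun_prop
    have hcz' : Filter.Tendsto (fun s : ℝ => Z (s, y)) (nhdsWithin t (Iio t)) (nhds (Z (t, y))) :=
      (hcz.tendsto.comp (hpc.tendsto t)).mono_left nhdsWithin_le_nhds
    refine le_of_tendsto hcz' ?_
    filter_upwards [Ioo_mem_nhdsLT htt] with s hs
    exact (hbefore s ⟨hs.1.le, hs.2⟩ y hy).le
  have heq : Z (t, x) = l x := le_antisymm (hat x hx) (by linarith)
  have hcd : ContDiffAt ℝ 2 Z (t, x) := hZ.contDiffAt (hU.mem_nhds (hQ hqQ))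
  have hdiff : HasFDerivAt Z (fderiv ℝ Z (t, x)) (t, x) :=
    (hcd.differentiableAt (by simp)).hasFDerivAt
  -- local max along lines
  have hlm : ∀ y : EuclideanSpace ℝ (Fin d),
      IsLocalMax (fun s : ℝ => Z ((t, x) + s • ((0:ℝ), y)) - l (x + s • y)) 0 := by
    intro y
    have : ∀ᶠ s : ℝ in nhds 0, x + s • y ∈ ball x1 r := by
      have hc : ContinuousAt (fun s : ℝ => x + s • y) 0 := by fun_prop
      apply hc.eventually_mem
      exact isOpen_ball.mem_nhds (by simpa using hxr)
    filter_upwards [this] with s hs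
    have := hat _ (ball_subset_closedBall hs)
    simp [heq]
    simpa using this
  have hline : ∀ y : EuclideanSpace ℝ (Fin d), ∀ s : ℝ,
      HasDerivAt (fun s : ℝ => l (x + s • y)) (inner ℝ ξ y) s := by
    intro y s
    have h1 : (fun s : ℝ => l (x + s • y)) = fun s => h + inner ℝ ξ (x - x1) + s * inner ℝ ξ y := by
      ext s
      simp only [hl]
      rw [show x + s • y - x1 = (x - x1) + s • y by abel, inner_add_right, inner_smul_right]
      ring
    rw [h1]
    simpa using ((hasDerivAt_id s).mul_const (inner ℝ ξ y)).const_add (h + inner ℝ ξ (x - x1))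
  have hcur : ∀ v : ℝ × EuclideanSpace ℝ (Fin d), ∀ s : ℝ,
      HasDerivAt (fun s : ℝ => (t, x) + s • v) v s := by
    intro v s
    simpa using ((hasDerivAt_id s).smul_const v).const_add (t, x)
  have hdl : ∀ v : ℝ × EuclideanSpace ℝ (Fin d),
      HasDerivAt (fun s : ℝ => Z ((t, x) + s • v)) (fderiv ℝ Z (t, x) v) 0 := by
    intro v
    have h0 : HasFDerivAt Z (fderiv ℝ Z (t, x)) ((t, x) + (0:ℝ) • v) := by simpa using hdiff
    exact h0.comp_hasDerivAt (0:ℝ) (hcur v 0)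
  refine ⟨(t, x), hqQ, hZpos, ?_, ?_, ?_, ?_⟩
  · simp only [heq, hl]; ring
  · intro y
    have := (hlm y).hasDerivAt_eq_zero ((hdl (0, y)).sub (hline y 0))
    linarith
  · by_contra hneg
    push Not at hneg
    have h1 := hdl (1, 0)
    have h2 : ∀ᶠ s : ℝ in nhdsWithin 0 (Iio 0), Z (t, x) < Z ((t, x) + s • ((1:ℝ), (0 : EuclideanSpace ℝ (Fin d)))) := by
      have h3 := (hasDerivAt_iff_tendsto_slope.1 h1).mono_left
        (nhdsWithin_mono (0:ℝ) (show Iio (0:ℝ) ⊆ {0}ᶜ from fun s hs => ne_of_lt hs))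
      have h4 := h3.eventually (gt_mem_nhds hneg)
      filter_upwards [h4, self_mem_nhdsWithin] with s hs hs0
      simp only [slope_def_field, mem_Iio] at hs hs0
      have h5 : 0 < (Z ((t, x) + s • ((1:ℝ), (0 : EuclideanSpace ℝ (Fin d)))) - Z ((t, x) + (0:ℝ) • ((1:ℝ), (0 : EuclideanSpace ℝ (Fin d))))) := by
        by_contra hc
        push Not at hc
        have := div_nonneg_of_nonpos hc (show s - 0 ≤ 0 by linarith)
        linarith
      simpa using h5
    have h6 : ∀ᶠ s : ℝ in nhdsWithin 0 (Iio 0), t1 - τ ≤ t + s := by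
      apply Filter.Eventually.filter_mono nhdsWithin_le_nhds
      have : ContinuousAt (fun s : ℝ => t + s) 0 := by fun_prop
      exact (this.eventually_mem (Ioi_mem_nhds (by simpa using htt))).mono fun s hs => le_of_lt hs
    obtain ⟨s, hs1, hs2, hs3⟩ := (h2.and (h6.and
      (self_mem_nhdsWithin : Iio (0:ℝ) ∈ nhdsWithin 0 (Iio 0)))).exists
    replace hs3 : s < 0 := hs3
    have := hbefore (t + s) ⟨hs2, by linarith⟩ x hx
    have e : ((t, x) : ℝ × EuclideanSpace ℝ (Fin d)) + s • ((1:ℝ), (0 : EuclideanSpace ℝ (Fin d))) =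
      (t + s, x) := by simp
    rw [e] at hs1
    linarith
  · intro y
    rw [← dd_line hcd]
    have h1 := snd_deriv_le_zero (hlm y) ((hdl (0, y)).sub (hline y 0)).continuousAt
    have h2 : (deriv fun s : ℝ => Z ((t, x) + s • ((0:ℝ), y)) - l (x + s • y)) =ᶠ[nhds 0]
        fun s => deriv (fun s : ℝ => Z ((t, x) + s • ((0:ℝ), y))) s - inner ℝ ξ y := by
      have h3 : ∀ᶠ p in nhds (t, x), DifferentiableAt ℝ Z p := by
        filter_upwards [hcd.eventually (by simp)] with p hp
        exact hp.differentiableAt (by simp)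
      have h4 : ∀ᶠ s : ℝ in nhds 0, DifferentiableAt ℝ Z ((t, x) + s • ((0:ℝ), y)) := by
        apply (hcur (0, y) 0).continuousAt.eventually
        simpa using h3
      filter_upwards [h4] with s hs
      exact ((hs.hasFDerivAt.comp_hasDerivAt s (hcur (0,y) s)).differentiableAt.hasDerivAt.sub
        (hline y s)).deriv
    rw [h2.deriv_eq, deriv_sub_const] at h1
    exact h1

noncomputable def spGrad (d : ℕ) :
    (ℝ × EuclideanSpace ℝ (Fin d) →L[ℝ] ℝ) →L[ℝ] EuclideanSpace ℝ (Fin d) :=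
  ((EuclideanSpace.equiv (Fin d) ℝ).symm : (Fin d → ℝ) →L[ℝ] EuclideanSpace ℝ (Fin d)).comp
    (ContinuousLinearMap.pi fun i => ContinuousLinearMap.apply ℝ ℝ ((0:ℝ), EuclideanSpace.single i (1:ℝ)))

lemma spGrad_apply {d : ℕ} (L : ℝ × EuclideanSpace ℝ (Fin d) →L[ℝ] ℝ) (i : Fin d) :
    spGrad d L i = L (0, EuclideanSpace.single i 1) := by
  simp [spGrad]

lemma spGrad_inner {d : ℕ} (L : ℝ × EuclideanSpace ℝ (Fin d) →L[ℝ] ℝ)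
    (y : EuclideanSpace ℝ (Fin d)) : inner ℝ (spGrad d L) y = L (0, y) := by
  have hy : y = ∑ i, y i • EuclideanSpace.single i (1:ℝ) := by
    ext j; simp [Finset.sum_apply, Pi.single_apply]
  have h2 : L (0, y) = (L.comp (ContinuousLinearMap.inr ℝ ℝ _)) y := by simp
  have h3 : (L.comp (ContinuousLinearMap.inr ℝ ℝ _)) y =
      ∑ i, y i * (L.comp (ContinuousLinearMap.inr ℝ ℝ _)) (EuclideanSpace.single i (1:ℝ)) := by
    conv_lhs => rw [hy]
    rw [map_sum]
    simp only [map_smul, smul_eq_mul]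
  rw [h2, h3, PiLp.inner_apply]
  simp [spGrad_apply]

lemma spGrad_eq {d : ℕ} (L : ℝ × EuclideanSpace ℝ (Fin d) →L[ℝ] ℝ)
    (ξ : EuclideanSpace ℝ (Fin d)) (h : ∀ y, L (0, y) = inner ℝ ξ y) : spGrad d L = ξ := by
  apply ext_inner_right ℝ
  intro y
  rw [spGrad_inner, h]

lemma offdiag {d : ℕ} (B : ℝ × EuclideanSpace ℝ (Fin d) →L[ℝ] ℝ × EuclideanSpace ℝ (Fin d) →L[ℝ] ℝ)
    (hs : ∀ v w, B v w = B w v) (hn : ∀ y, B (0, y) (0, y) ≤ 0) (b : ℝ)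
    (hb : ∀ i, |B (0, EuclideanSpace.single i 1) (0, EuclideanSpace.single i 1)| ≤ b) (i j : Fin d) :
    |B (0, EuclideanSpace.single i 1) (0, EuclideanSpace.single j 1)| ≤ b := by
  set e := ((0:ℝ), EuclideanSpace.single i (1:ℝ)) with he
  set f := ((0:ℝ), EuclideanSpace.single j (1:ℝ)) with hf
  have h1 : B (e + f) (e + f) ≤ 0 := by
    have := hn (EuclideanSpace.single i (1:ℝ) + EuclideanSpace.single j (1:ℝ))
    simpa [he, hf] using this
  have h2 : B (e - f) (e - f) ≤ 0 := by
    have := hn (EuclideanSpace.single i (1:ℝ) - EuclideanSpace.single j (1:ℝ))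
    simpa [he, hf] using this
  have h3 := hs f e
  have h4 := abs_le.1 (hb i)
  have h5 := abs_le.1 (hb j)
  simp only [map_add, map_sub, _root_.add_apply, _root_.sub_apply] at h1 h2
  rw [abs_le]
  constructor <;> linarith [h4.1, h5.1]

lemma abp_det {d : ℕ} (c : ℝ) (l : EuclideanSpace ℝ (Fin d))
    (N : ℝ × EuclideanSpace ℝ (Fin d) →L[ℝ] EuclideanSpace ℝ (Fin d))
    (F : ℝ × EuclideanSpace ℝ (Fin d) →L[ℝ] ℝ × EuclideanSpace ℝ (Fin d))
    (hF : ∀ q, F q = (c * q.1 - inner ℝ (N q) l, N q)) (a b : ℝ) (hc : |c| ≤ a)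
    (hb : ∀ i j, |N (0, EuclideanSpace.single j 1) i| ≤ b) :
    |F.det| ≤ a * (d.factorial * b ^ d) := by
  set T : (ℝ × EuclideanSpace ℝ (Fin d)) →ₗ[ℝ] (ℝ × EuclideanSpace ℝ (Fin d)) :=
    LinearMap.prod (c • LinearMap.fst ℝ ℝ _) N.toLinearMap with hT
  set l' : EuclideanSpace ℝ (Fin d) →ₗ[ℝ] ℝ := (innerSL ℝ l).toLinearMap with hl'
  set S : (ℝ × EuclideanSpace ℝ (Fin d)) →ₗ[ℝ] (ℝ × EuclideanSpace ℝ (Fin d)) :=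
    LinearMap.prod (LinearMap.fst ℝ ℝ _ - l'.comp (LinearMap.snd ℝ ℝ _)) (LinearMap.snd ℝ ℝ _) with hS
  have hcomp : F.toLinearMap = S.comp T := by
    apply LinearMap.ext
    intro q
    simp [hF, hS, hT, hl', real_inner_comm]
  have h1 : F.det = LinearMap.det S * LinearMap.det T := by
    rw [ContinuousLinearMap.det, hcomp, LinearMap.det_comp]
  rw [h1, det_shear l' S (by intro q; simp [hS]), one_mul, det_lower T (by simp [hT]), abs_mul]
  have h2 : |(T (1, 0)).1| ≤ a := by simpa [hT] using hc
  have h3 : |Matrix.det (Matrix.of fun i j : Fin d => (T (0, EuclideanSpace.single j 1)).2 i)|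
      ≤ d.factorial * b ^ d := by
    have := Matrix.det_le (R := ℝ) (S := ℝ) (A := Matrix.of fun i j : Fin d => (T (0, EuclideanSpace.single j 1)).2 i)
      (abv := AbsoluteValue.abs) (x := b) (by intro i j; simpa [hT] using hb i j)
    simpa using this
  exact mul_le_mul h2 h3 (abs_nonneg _) ((abs_nonneg _).trans hc)

set_option maxHeartbeats 1000000 in
lemma abp {d : ℕ} {U : Set (ℝ × EuclideanSpace ℝ (Fin d))} (hU : IsOpen U)
    {Z : ℝ × EuclideanSpace ℝ (Fin d) → ℝ} (hZ : ContDiffOn ℝ 2 Z U)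
    {t1 τ r : ℝ} {x1 : EuclideanSpace ℝ (Fin d)} (hr : 0 < r) (hτ : 0 < τ)
    (hQ : Icc (t1 - τ) t1 ×ˢ closedBall x1 r ⊆ U)
    (hbot : ∀ x ∈ closedBall x1 r, Z (t1 - τ, x) ≤ 0)
    (hlat : ∀ t ∈ Icc (t1 - τ) t1, ∀ x, dist x x1 = r → Z (t, x) ≤ 0)
    (htop : 1 / 2 ≤ Z (t1, x1)) (a b : ℝ)
    (hcon : ∀ q ∈ Icc (t1 - τ) t1 ×ˢ closedBall x1 r, 0 < Z q → 0 ≤ fderiv ℝ Z q (1, 0) →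
      (∀ y : EuclideanSpace ℝ (Fin d), fderiv ℝ (fderiv ℝ Z) q (0, y) (0, y) ≤ 0) →
      |fderiv ℝ Z q (1, 0)| ≤ a ∧ ∀ i, |fderiv ℝ (fderiv ℝ Z) q (0, EuclideanSpace.single i 1)
        (0, EuclideanSpace.single i 1)| ≤ b) :
    ENNReal.ofReal (1 / 4) * volume (ball (0 : EuclideanSpace ℝ (Fin d)) (1 / (8 * r))) ≤
      ENNReal.ofReal (a * (d.factorial * b ^ d)) *
        volume ((Icc (t1 - τ) t1 ×ˢ closedBall x1 r) ∩ Z ⁻¹' Ici (1/8)) := by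
  set Q := Icc (t1 - τ) t1 ×ˢ closedBall x1 r with hQdef
  have hQc : IsClosed Q := isClosed_Icc.prod isClosed_closedBall
  have hfc : ContinuousOn (fderiv ℝ Z) Q :=
    (hZ.continuousOn_fderiv_of_isOpen hU (by norm_num)).mono hQ
  have hf1 : ContDiffOn ℝ 1 (fderiv ℝ Z) U := hZ.fderiv_of_isOpen hU (by norm_num)
  have hffc : ContinuousOn (fderiv ℝ (fderiv ℝ Z)) Q :=
    (hf1.continuousOn_fderiv_of_isOpen hU (by norm_num)).mono hQ
  set G := (Q ∩ Z ⁻¹' Ici (1/8)) ∩ ((Q ∩ (fun q => |fderiv ℝ Z q (1, 0)|) ⁻¹' Iic a) ∩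
    ⋂ i : Fin d, ⋂ j : Fin d, (Q ∩ (fun q => |fderiv ℝ (fderiv ℝ Z) q (0, EuclideanSpace.single i 1)
        (0, EuclideanSpace.single j 1)|) ⁻¹' Iic b)) with hG
  have hGc : IsClosed G := by
    refine ((hZ.continuousOn.mono hQ).preimage_isClosed_of_isClosed hQc isClosed_Ici).inter
      (IsClosed.inter ?_ (isClosed_iInter fun i => isClosed_iInter fun j => ?_))
    · exact ((hfc.clm_apply continuousOn_const).abs).preimage_isClosed_of_isClosed hQc isClosed_Iic
    · exact (((hffc.clm_apply continuousOn_const).clm_apply continuousOn_const).abs).preimage_isClosed_of_isClosed hQc isClosed_Iic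
  set Φ : ℝ × EuclideanSpace ℝ (Fin d) → ℝ × EuclideanSpace ℝ (Fin d) := fun q =>
    (Z q - inner ℝ (spGrad d (fderiv ℝ Z q)) (q.2 - x1), spGrad d (fderiv ℝ Z q)) with hΦ
  set N : ℝ × EuclideanSpace ℝ (Fin d) → (ℝ × EuclideanSpace ℝ (Fin d) →L[ℝ] EuclideanSpace ℝ (Fin d)) :=
    fun q => (spGrad d).comp (fderiv ℝ (fderiv ℝ Z) q) with hN
  set F : ℝ × EuclideanSpace ℝ (Fin d) → (ℝ × EuclideanSpace ℝ (Fin d) →L[ℝ] ℝ × EuclideanSpace ℝ (Fin d)) :=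
    fun q => ((fderiv ℝ Z q (1, 0)) • (ContinuousLinearMap.fst ℝ ℝ _) -
      (innerSL ℝ (q.2 - x1)).comp (N q)).prod (N q) with hF
  have hFe : ∀ q v, F q v = (fderiv ℝ Z q (1, 0) * v.1 - inner ℝ (N q v) (q.2 - x1), N q v) := by
    intro q v
    rw [real_inner_comm]
    rfl
  have hder : ∀ q ∈ G, HasFDerivWithinAt Φ (F q) G q := by
    intro q hq
    have hqU : q ∈ U := hQ hq.1.1
    have hcd : ContDiffAt ℝ 2 Z q := hZ.contDiffAt (hU.mem_nhds hqU)
    have h1 : HasFDerivAt Z (fderiv ℝ Z q) q := (hcd.differentiableAt (by simp)).hasFDerivAt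
    have h2 : HasFDerivAt (fderiv ℝ Z) (fderiv ℝ (fderiv ℝ Z) q) q :=
      ((hcd.fderiv_right (m := 1) (by norm_num)).differentiableAt (by simp)).hasFDerivAt
    have h3 : HasFDerivAt (fun q => spGrad d (fderiv ℝ Z q)) (N q) q :=
      (spGrad d).hasFDerivAt.comp q h2
    have h4 : HasFDerivAt (fun q : ℝ × EuclideanSpace ℝ (Fin d) => q.2 - x1)
        (ContinuousLinearMap.snd ℝ ℝ _) q := hasFDerivAt_snd.sub_const x1
    have h5 := (h1.sub (h3.inner ℝ h4)).prodMk h3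
    refine HasFDerivAt.hasFDerivWithinAt ?_
    refine HasFDerivAt.congr_fderiv h5 (Eq.symm ?_)
    apply ContinuousLinearMap.ext
    intro v
    rw [hFe]
    simp only [ContinuousLinearMap.prod_apply, _root_.sub_apply]
    congr 1
    have h6 : fderiv ℝ Z q v = fderiv ℝ Z q (1, 0) * v.1 + inner ℝ (spGrad d (fderiv ℝ Z q)) v.2 := by
      rw [spGrad_inner]
      have : v = v.1 • ((1:ℝ), (0 : EuclideanSpace ℝ (Fin d))) + (0, v.2) := by ext <;> simp
      conv_lhs => rw [this]
      rw [map_add, map_smul, smul_eq_mul, mul_comm]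
    rw [h6]
    simp
    ring
  have hsub : Ioo (1/4 : ℝ) (1/2) ×ˢ ball (0 : EuclideanSpace ℝ (Fin d)) (1 / (8 * r)) ⊆ Φ '' G := by
    rintro ⟨h, ξ⟩ hh
    obtain ⟨⟨hh1, hh2⟩, hh3⟩ := Set.mem_prod.1 hh
    simp only at hh1 hh2 hh3
    have hξ : ‖ξ‖ * r + 1/8 ≤ h := by
      have : ‖ξ‖ < 1 / (8 * r) := by simpa using hh3
      have h8 : ‖ξ‖ * r ≤ 1 / (8 * r) * r := by gcongr
      have h9 : 1 / (8 * r) * r = 1 / 8 := by field_simp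
      linarith
    obtain ⟨q, hq, hq1, hq2, hq3, hq4, hq5⟩ := contact hU hZ hr hτ hQ hbot hlat
      (lt_of_lt_of_le hh2 htop) (by norm_num : (0:ℝ) < 1/8) hξ
    obtain ⟨ha, hb⟩ := hcon q hq (by linarith) hq4 hq5
    have hcd : ContDiffAt ℝ 2 Z q := hZ.contDiffAt (hU.mem_nhds (hQ hq))
    have hsym : IsSymmSndFDerivAt ℝ Z q := hcd.isSymmSndFDerivAt (by simp)
    have hge := spGrad_eq _ ξ hq3
    refine ⟨q, ⟨⟨hq, hq1⟩, ⟨hq, ha⟩, ?_⟩, ?_⟩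
    · simp only [mem_iInter]
      intro i j
      exact ⟨hq, offdiag _ (fun v w => hsym v w) hq5 b hb i j⟩
    · simp only [hΦ, hge, hq2]
  have hvol : volume (Ioo (1/4 : ℝ) (1/2) ×ˢ ball (0 : EuclideanSpace ℝ (Fin d)) (1 / (8 * r)))
      = ENNReal.ofReal (1 / 4) * volume (ball (0 : EuclideanSpace ℝ (Fin d)) (1 / (8 * r))) := by
    rw [Measure.volume_eq_prod, Measure.prod_prod, Real.volume_Ioo]
    norm_num
  have : (volume : Measure (ℝ × EuclideanSpace ℝ (Fin d))).IsAddHaarMeasure := by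
    rw [Measure.volume_eq_prod]; infer_instance
  rw [← hvol]
  calc _ ≤ volume (Φ '' G) := measure_mono hsub
    _ ≤ ∫⁻ q in G, ENNReal.ofReal |(F q).det| :=
      addHaar_image_le_lintegral_abs_det_fderiv volume hGc.measurableSet hder
    _ ≤ ∫⁻ q in G, ENNReal.ofReal (a * (d.factorial * b ^ d)) := by
      refine setLIntegral_mono' hGc.measurableSet ?_
      intro q hq
      apply ENNReal.ofReal_le_ofReal
      refine abp_det _ _ (N q) (F q) (hFe q) a b hq.2.1.2 ?_
      intro i j
      have := hq.2.2
      simp only [mem_iInter] at this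
      have h7 := (this j i).2
      simpa [hN, spGrad_apply] using h7
    _ = ENNReal.ofReal (a * (d.factorial * b ^ d)) * volume G := by simp
    _ ≤ _ := by gcongr; exact inter_subset_left

lemma slice_dd {d : ℕ} {W : ℝ × EuclideanSpace ℝ (Fin d) → ℝ} {t : ℝ}
    {x e : EuclideanSpace ℝ (Fin d)} (hW : ContDiffAt ℝ 2 W (t, x)) :
    fderiv ℝ (fun y => fderiv ℝ (fun y' => W (t, y')) y e) x e =
      fderiv ℝ (fderiv ℝ W) (t, x) (0, e) (0, e) := by
  have hin : ∀ y, HasFDerivAt (fun y : EuclideanSpace ℝ (Fin d) => (t, y))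
      (ContinuousLinearMap.inr ℝ ℝ (EuclideanSpace ℝ (Fin d))) y := by
    intro y
    exact (hasFDerivAt_const t y).prodMk (hasFDerivAt_id y)
  have h1 : ∀ᶠ p in nhds (t, x), DifferentiableAt ℝ W p := by
    filter_upwards [hW.eventually (by simp)] with p hp
    exact hp.differentiableAt (by simp)
  have h2 : ∀ᶠ y in nhds x, DifferentiableAt ℝ W (t, y) := (hin x).continuousAt.eventually h1
  have h3 : (fun y => fderiv ℝ (fun y' => W (t, y')) y e) =ᶠ[nhds x]
      fun y => fderiv ℝ W (t, y) (0, e) := by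
    filter_upwards [h2] with y hy
    have := (hy.hasFDerivAt.comp y (hin y)).fderiv
    have h4 : fderiv ℝ (fun y' => W (t, y')) y = (fderiv ℝ W (t, y)).comp
      (ContinuousLinearMap.inr ℝ ℝ (EuclideanSpace ℝ (Fin d))) := this
    rw [h4]; simp
  rw [h3.fderiv_eq]
  have h5 : HasFDerivAt (fderiv ℝ W) (fderiv ℝ (fderiv ℝ W) (t, x)) (t, x) :=
    ((hW.fderiv_right (m := 1) (by norm_num)).differentiableAt (by simp)).hasFDerivAt
  have h6 := (ContinuousLinearMap.apply ℝ ℝ ((0:ℝ), e)).hasFDerivAt.comp x (h5.comp x (hin x))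
  have h7 : fderiv ℝ (fun y => fderiv ℝ W (t, y) (0, e)) x = _ := h6.fderiv
  rw [h7]; simp

lemma slice_lap {d : ℕ} {W : ℝ × EuclideanSpace ℝ (Fin d) → ℝ} {t : ℝ}
    {x : EuclideanSpace ℝ (Fin d)} (hW : ContDiffAt ℝ 2 W (t, x)) :
    spaceLap (fun y => W (t, y)) x =
      ∑ i, fderiv ℝ (fderiv ℝ W) (t, x) (0, EuclideanSpace.single i 1) (0, EuclideanSpace.single i 1) := by
  unfold spaceLap
  exact Finset.sum_congr rfl fun i _ => slice_dd hW

lemma slice_time {d : ℕ} {W : ℝ × EuclideanSpace ℝ (Fin d) → ℝ} {t : ℝ}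
    {x : EuclideanSpace ℝ (Fin d)} (hW : DifferentiableAt ℝ W (t, x)) :
    HasDerivAt (fun s => W (s, x)) (fderiv ℝ W (t, x) (1, 0)) t := by
  have hin : HasDerivAt (fun s : ℝ => (s, x)) ((1:ℝ), (0 : EuclideanSpace ℝ (Fin d))) t :=
    (hasDerivAt_id t).prodMk (hasDerivAt_const t x)
  exact hW.hasFDerivAt.comp_hasDerivAt t hin

/-- the equation in terms of `W = u^m`. -/
lemma fde_W {d : ℕ} {m T : ℝ} {Ω : Set (EuclideanSpace ℝ (Fin d))} (hΩ : IsOpen Ω)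
    {u : ℝ → EuclideanSpace ℝ (Fin d) → ℝ} (hu : IsFDESol m (Ioo 0 T ×ˢ Ω) u) :
    IsOpen (Ioo 0 T ×ˢ Ω) ∧
    (∀ k : ℝ, ContDiffOn ℝ 2 (fun q : ℝ × EuclideanSpace ℝ (Fin d) => u q.1 q.2 ^ k) (Ioo 0 T ×ˢ Ω)) ∧
    ∀ q ∈ Ioo 0 T ×ˢ Ω, ∀ k : ℝ, 
      HasDerivAt (fun s => u s q.2 ^ k) (k * u q.1 q.2 ^ (k - 1) *
      spaceLap (fun y => u q.1 y ^ m) q.2) q.1 := by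
  have hop : IsOpen (Ioo 0 T ×ˢ Ω) := isOpen_Ioo.prod hΩ
  have hu2 : ContDiffOn ℝ 2 (fun q : ℝ × EuclideanSpace ℝ (Fin d) => u q.1 q.2) (Ioo 0 T ×ˢ Ω) :=
    hu.2.1.of_le (WithTop.coe_le_coe.2 (le_top : (2:ℕ∞) ≤ ⊤))
  refine ⟨hop, fun k => hu2.rpow_const_of_ne (fun q hq => (hu.1 q hq).ne'), ?_⟩
  rintro ⟨t, x⟩ hq k
  have h1 := slice_time ((hu2.contDiffAt (hop.mem_nhds hq)).differentiableAt (by simp))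
  have h2 : HasDerivAt (fun s => u s x) (spaceLap (fun y => u t y ^ m) x) t := by
    have h3 := hu.2.2 _ hq
    have h4 : DifferentiableAt ℝ (fun s => u s x) t := h1.differentiableAt
    rw [← h3]; exact h4.hasDerivAt
  have h5 := h2.rpow_const (p := k) (Or.inl (hu.1 _ hq).ne')
  convert h5 using 1
  ring

lemma contact_arith {m M r τ u σ κ L D : ℝ} (hm0 : 0 < m) (hm1 : m < 1) (hM : 0 < M) (hr : 0 < r)
    (hτ : τ = M ^ (1 - m) * r ^ 2) (hκ : 0 < κ) (hL : 0 < L) (h1 : κ * M ≤ u) (h2 : u ≤ L * M)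
    (hD : 0 ≤ D)
    (h3 : 0 ≤ m * u ^ (m - 1) * σ + 1 / τ) (h4 : σ ≤ 2 * D / r ^ 2) :
    |m * u ^ (m - 1) * σ + 1 / τ| ≤ (2 * D * m * κ ^ (m - 1) + 1) / τ ∧
      2 * D / r ^ 2 - σ ≤ (2 * D + L ^ (1 - m) / m) / r ^ 2 := by
  have hκM : 0 < κ * M := by positivity
  have hu : 0 < u := by linarith
  have hU1 : u ^ (m - 1) ≤ κ ^ (m - 1) * M ^ (m - 1) := by
    rw [← Real.mul_rpow hκ.le hM.le]
    exact Real.rpow_le_rpow_of_nonpos hκM h1 (by linarith)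
  have hU2 : L ^ (m - 1) * M ^ (m - 1) ≤ u ^ (m - 1) := by
    rw [← Real.mul_rpow hL.le hM.le]
    exact Real.rpow_le_rpow_of_nonpos hu h2 (by linarith)
  have hA : 0 < M ^ (m - 1) := by positivity
  have hMM : M ^ (1 - m) = (M ^ (m - 1))⁻¹ := by
    rw [← Real.rpow_neg hM.le]; congr 1; ring
  have hLL : L ^ (1 - m) = (L ^ (m - 1))⁻¹ := by
    rw [← Real.rpow_neg hL.le]; congr 1; ring
  have hLp : 0 < L ^ (m - 1) := by positivity
  rw [hMM] at hτ
  rw [hLL]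
  set A := M ^ (m - 1)
  set U := u ^ (m - 1)
  set K := κ ^ (m - 1)
  set B := L ^ (m - 1)
  have hUp : 0 < U := by positivity
  have hτp : 0 < τ := by rw [hτ]; positivity
  have hτ1 : 1 / τ = A / r ^ 2 := by rw [hτ]; field_simp
  constructor
  · rw [abs_of_nonneg h3]
    have e : (2 * D * m * K + 1) / τ = m * (K * A) * (2 * D / r ^ 2) + 1 / τ := by
      rw [add_div, div_eq_mul_one_div (2 * D * m * K) τ, hτ1]; ring
    rw [e]
    have : m * U * σ ≤ m * U * (2 * D / r ^ 2) := by gcongr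
    have : m * U * (2 * D / r ^ 2) ≤ m * (K * A) * (2 * D / r ^ 2) := by gcongr
    linarith
  · rw [hτ1] at h3
    have h5 : -σ ≤ B⁻¹ / m / r ^ 2 := by
      have h6 : m * U * (-σ) ≤ A / r ^ 2 := by linarith
      have h7 : -σ ≤ A / r ^ 2 / (m * U) := by
        rw [le_div_iff₀ (by positivity)]; linarith
      refine h7.trans ?_
      have h8 : A / r ^ 2 / (m * U) ≤ A / r ^ 2 / (m * (B * A)) := by gcongr
      refine h8.trans (le_of_eq ?_)
      field_simp
    rw [add_div]; linarith

set_option maxHeartbeats 1000000 in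
lemma cyl (d : ℕ) (hd : 0 < d) {m : ℝ} (hm0 : 0 < m) (hm1 : m < 1) : ∃ c : ℝ, 0 < c ∧
    ∀ (Ω : Set (EuclideanSpace ℝ (Fin d))) (_ : IsOpen Ω)
      (u : ℝ → EuclideanSpace ℝ (Fin d) → ℝ) (T : ℝ) (_ : IsFDESol m (Ioo 0 T ×ˢ Ω) u)
      (t1 r τ M : ℝ) (x1 : EuclideanSpace ℝ (Fin d)) (_ : 0 < r) (_ : 0 < M) (_ : u t1 x1 = M)
      (_ : τ = M ^ (1 - m) * r ^ 2)
      (_ : Icc (t1 - τ) t1 ×ˢ closedBall x1 r ⊆ Ioo 0 T ×ˢ Ω)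
      (_ : ∀ q ∈ Icc (t1 - τ) t1 ×ˢ closedBall x1 r, u q.1 q.2 ≤ (3 / 2) ^ (1 / m) * M),
      ENNReal.ofReal (c * (τ * r ^ d)) ≤ volume ((Icc (t1 - τ) t1 ×ˢ closedBall x1 r) ∩
        {q | (1 / 2) ^ (1 / m) * M ≤ u q.1 q.2}) := by
  set κ : ℝ := (1 / 2) ^ (1 / m) with hκ
  set L : ℝ := (3 / 2) ^ (1 / m) with hL
  have hκp : 0 < κ := by positivity
  have hLp : 0 < L := by positivity
  have hκm : κ ^ m = 1 / 2 := by rw [hκ, ← Real.rpow_mul (by norm_num)]; field_simp; simp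
  have hLm : L ^ m = 3 / 2 := by
    rw [hL, ← Real.rpow_mul (by norm_num), one_div_mul_cancel hm0.ne', Real.rpow_one]
  set ca : ℝ := 2 * d * m * κ ^ (m - 1) + 1 with hca
  set cb : ℝ := 2 * d + L ^ (1 - m) / m with hcb
  have hcap : 0 < ca := by positivity
  have hcbp : 0 < cb := by positivity
  set V : ℝ := (volume (ball (0 : EuclideanSpace ℝ (Fin d)) 1)).toReal with hV
  have hVtop : volume (ball (0 : EuclideanSpace ℝ (Fin d)) 1) ≠ ⊤ := measure_ball_lt_top.ne
  have hVp : 0 < V := ENNReal.toReal_pos (measure_ball_pos volume _ one_pos).ne' hVtop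
  have hfac : (0:ℝ) < d.factorial := by exact_mod_cast d.factorial_pos
  refine ⟨(1 / 4 * ((1 / 8) ^ d * V)) / (ca * (d.factorial * cb ^ d)), by positivity, ?_⟩
  intro Ω hΩ u T hu t1 r τ M x1 hr hM hu1 hτ hQ hbd
  have hτp : 0 < τ := by rw [hτ]; positivity
  obtain ⟨hop, hsm, heqn⟩ := fde_W hΩ hu
  set U := Ioo 0 T ×ˢ Ω with hUdef
  set W : ℝ × EuclideanSpace ℝ (Fin d) → ℝ := fun q => u q.1 q.2 ^ m with hW
  have hWs : ContDiffOn ℝ 2 W U := hsm m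
  set P : ℝ × EuclideanSpace ℝ (Fin d) → ℝ := fun q =>
    (r ^ 2)⁻¹ * ‖q.2 - x1‖ ^ 2 + τ⁻¹ * (t1 - q.1) + 1 / 2 with hP
  have hPs : ContDiff ℝ 2 P := by
    have : ContDiff ℝ 2 (fun q : ℝ × EuclideanSpace ℝ (Fin d) => ‖q.2 - x1‖ ^ 2) :=
      (contDiff_snd.sub contDiff_const).norm_sq ℝ
    fun_prop
  set Z : ℝ × EuclideanSpace ℝ (Fin d) → ℝ := fun q => M ^ (-m) * W q - P q with hZ
  have hZs : ContDiffOn ℝ 2 Z U := (contDiffOn_const.mul hWs).sub hPs.contDiffOn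
  have hMm : M ^ (-m) * M ^ m = 1 := by rw [← Real.rpow_add hM]; simp
  have hWb : ∀ q ∈ Icc (t1 - τ) t1 ×ˢ closedBall x1 r, M ^ (-m) * W q ≤ 3 / 2 := by
    intro q hq
    have h1 : W q ≤ (L * M) ^ m :=
      Real.rpow_le_rpow (hu.1 q (hQ hq)).le (hbd q hq) hm0.le
    rw [Real.mul_rpow hLp.le hM.le, hLm] at h1
    have : M ^ (-m) * W q ≤ M ^ (-m) * (3 / 2 * M ^ m) := by gcongr
    nlinarith
  -- derivatives
  have hdd : ∀ q ∈ U, fderiv ℝ Z q (1, 0) = M ^ (-m) * fderiv ℝ W q (1, 0) + 1 / τ ∧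
      ∀ i, fderiv ℝ (fderiv ℝ Z) q (0, EuclideanSpace.single i 1) (0, EuclideanSpace.single i 1)
        = M ^ (-m) * fderiv ℝ (fderiv ℝ W) q (0, EuclideanSpace.single i 1)
          (0, EuclideanSpace.single i 1) - 2 / r ^ 2 := by
    intro q hq
    have hWq : ContDiffAt ℝ 2 W q := hWs.contDiffAt (hop.mem_nhds hq)
    have hfd : ∀ᶠ p in nhds q, fderiv ℝ Z p = M ^ (-m) • fderiv ℝ W p - fderiv ℝ P p := by
      filter_upwards [hWq.eventually (by simp)] with p hp
      exact (((hp.differentiableAt (by simp)).hasFDerivAt.const_mul (M ^ (-m))).sub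
        ((hPs.differentiable (by simp)) p).hasFDerivAt).fderiv
    constructor
    · rw [hfd.self_of_nhds]
      have h1 : fderiv ℝ P q (1, 0) = - (1 / τ) := by
        have h2 := slice_time (W := P) (t := q.1) (x := q.2) ((hPs.differentiable (by simp)) _)
        have h3 : HasDerivAt (fun s => P (s, q.2)) (- (1 / τ)) q.1 := by
          simp only [hP]
          have := ((((hasDerivAt_id q.1).const_sub t1).const_mul τ⁻¹).const_add
            ((r ^ 2)⁻¹ * ‖q.2 - x1‖ ^ 2)).add_const (1/2)
          exact this.congr_deriv (by rw [one_div]; ring)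
        exact h2.unique h3
      simp [h1]
    · intro i
      set e : ℝ × EuclideanSpace ℝ (Fin d) := (0, EuclideanSpace.single i 1) with he
      have hW2 : DifferentiableAt ℝ (fderiv ℝ W) q :=
        (hWq.fderiv_right (m := 1) (by norm_num)).differentiableAt (by simp)
      have hP2 : DifferentiableAt ℝ (fderiv ℝ P) q :=
        (hPs.contDiffAt.fderiv_right (m := 1) (by norm_num)).differentiableAt (by simp)
      have hfd' : fderiv ℝ Z =ᶠ[nhds q] fun p => M ^ (-m) • fderiv ℝ W p - fderiv ℝ P p := hfd
      rw [hfd'.fderiv_eq]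
      have h4 : fderiv ℝ (fun p => M ^ (-m) • fderiv ℝ W p - fderiv ℝ P p) q =
          M ^ (-m) • fderiv ℝ (fderiv ℝ W) q - fderiv ℝ (fderiv ℝ P) q :=
        ((hW2.hasFDerivAt.const_smul (M ^ (-m))).sub hP2.hasFDerivAt).fderiv
      rw [h4]
      have h5 : fderiv ℝ (fderiv ℝ P) q e e = 2 / r ^ 2 := by
        rw [← dd_line hPs.contDiffAt]
        have h6 : (fun s : ℝ => P (q + s • e)) = fun s => P q +
            ((r ^ 2)⁻¹ * (2 * inner ℝ (q.2 - x1) (EuclideanSpace.single i 1)) * s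
             + (r ^ 2)⁻¹ * s ^ 2) := by
          ext s
          simp only [hP, he, Prod.snd_add, Prod.smul_snd, Prod.fst_add, Prod.smul_fst, smul_zero,
            add_zero]
          rw [show q.2 + s • EuclideanSpace.single i (1:ℝ) - x1 =
            (q.2 - x1) + s • EuclideanSpace.single i (1:ℝ) by abel, norm_add_sq_real,
            inner_smul_right, norm_smul]
          simp
          ring
        have h7 : ∀ c1 c2 c0 : ℝ, deriv (deriv fun s : ℝ => c0 + (c1 * s + c2 * s ^ 2)) 0 = 2 * c2 := by
          intro c1 c2 c0
          have h8 : (deriv fun s : ℝ => c0 + (c1 * s + c2 * s ^ 2)) = fun s => c1 + 2 * c2 * s := by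
            ext s
            have := (((hasDerivAt_id s).const_mul c1).add
              (((hasDerivAt_id s).pow 2).const_mul c2)).const_add c0
            have h9 : HasDerivAt (fun s : ℝ => c0 + (c1 * s + c2 * s ^ 2)) (c1 + 2 * c2 * s) s := by
              exact this.congr_deriv (by simp; ring)
            exact h9.deriv
          rw [h8]
          have : HasDerivAt (fun s : ℝ => c1 + 2 * c2 * s) (2 * c2) 0 := by
            simpa using ((hasDerivAt_id (0:ℝ)).const_mul (2 * c2)).const_add c1
          exact this.deriv
        rw [h6, h7]
        ring
      change M ^ (-m) * fderiv ℝ (fderiv ℝ W) q e e - fderiv ℝ (fderiv ℝ P) q e e = _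
      rw [h5]
  have hlow : ∀ q ∈ Icc (t1 - τ) t1 ×ˢ closedBall x1 r, 0 ≤ Z q → κ * M ≤ u q.1 q.2 := by
    intro q hq hz
    have h1 : 1 / 2 ≤ P q := by
      have : 0 ≤ t1 - q.1 := by linarith [(Set.mem_prod.1 hq).1.2]
      have : 0 ≤ (r ^ 2)⁻¹ * ‖q.2 - x1‖ ^ 2 + τ⁻¹ * (t1 - q.1) := by positivity
      simp only [hP]; linarith
    have h2 : 1 / 2 ≤ M ^ (-m) * W q := by simp only [hZ] at hz; linarith
    have h3 : (κ * M) ^ m ≤ W q := by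
      rw [Real.mul_rpow hκp.le hM.le, hκm]
      have : 0 < M ^ m := by positivity
      nlinarith
    exact (Real.rpow_le_rpow_iff (by positivity) (hu.1 q (hQ hq)).le hm0).1 h3
  have key := abp hop hZs hr hτp hQ (x1 := x1) (t1 := t1) ?_ ?_ ?_ (ca / τ) (cb / r ^ 2) ?_
  · -- conclude
    have hball : volume (ball (0 : EuclideanSpace ℝ (Fin d)) (1 / (8 * r))) =
        ENNReal.ofReal ((1 / (8 * r)) ^ d * V) := by
      rw [Measure.addHaar_ball_of_pos volume _ (by positivity), ENNReal.ofReal_mul (by positivity), hV,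
        ENNReal.ofReal_toReal hVtop]
      simp
    rw [hball, ← ENNReal.ofReal_mul (by norm_num)] at key
    set Y := ca / τ * (d.factorial * (cb / r ^ 2) ^ d) with hY
    have hYp : 0 < Y := by positivity
    have hmono : volume ((Icc (t1 - τ) t1 ×ˢ closedBall x1 r) ∩ Z ⁻¹' Ici (1/8)) ≤
        volume ((Icc (t1 - τ) t1 ×ˢ closedBall x1 r) ∩ {q | κ * M ≤ u q.1 q.2}) := by
      apply measure_mono
      rintro q ⟨hq, hq2⟩
      exact ⟨hq, hlow q hq (le_trans (by norm_num) hq2)⟩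
    refine le_trans ?_ hmono
    have h2 : ENNReal.ofReal Y⁻¹ * ENNReal.ofReal Y = 1 := by
      rw [← ENNReal.ofReal_mul (by positivity), inv_mul_cancel₀ hYp.ne', ENNReal.ofReal_one]
    calc _ = ENNReal.ofReal Y⁻¹ * ENNReal.ofReal (1 / 4 * ((1 / (8 * r)) ^ d * V)) := by
            rw [← ENNReal.ofReal_mul (by positivity)]
            congr 1
            rw [hY]
            have hrd : 0 < r ^ d := by positivity
            have hrd2 : (r ^ 2) ^ d = r ^ d * r ^ d := by rw [pow_right_comm, sq]
            simp only [div_pow, mul_pow, one_pow, hrd2]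
            field_simp
      _ ≤ ENNReal.ofReal Y⁻¹ * (ENNReal.ofReal Y * _) := by gcongr
      _ = _ := by rw [← mul_assoc, h2, one_mul]
  · intro x hx
    have h1 := hWb (t1 - τ, x) (Set.mk_mem_prod ⟨le_rfl, by linarith⟩ hx)
    have h2 : 1 + 1 / 2 ≤ P (t1 - τ, x) := by
      simp only [hP, sub_sub_cancel]
      rw [inv_mul_cancel₀ hτp.ne']
      have : 0 ≤ (r ^ 2)⁻¹ * ‖x - x1‖ ^ 2 := by positivity
      linarith
    simp only [hZ]; linarith
  · intro t ht x hx
    have h1 := hWb (t, x) (Set.mk_mem_prod ht (by simp [hx]))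
    have h2 : 1 + 1 / 2 ≤ P (t, x) := by
      simp only [hP]
      rw [← dist_eq_norm, hx, inv_mul_cancel₀ (by positivity)]
      have : 0 ≤ t1 - t := by linarith [ht.2]
      have : 0 ≤ τ⁻¹ * (t1 - t) := by positivity
      linarith
    simp only [hZ]; linarith
  · simp only [hZ, hP, hW, hu1, hMm]
    simp
    norm_num
  · intro q hq hz hzt hzd
    have hqU := hQ hq
    obtain ⟨hd1, hd2⟩ := hdd q hqU
    have hWq : ContDiffAt ℝ 2 W q := hWs.contDiffAt (hop.mem_nhds hqU)
    set S := ∑ i, fderiv ℝ (fderiv ℝ W) q (0, EuclideanSpace.single i 1) (0, EuclideanSpace.single i 1)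
      with hS
    have hWt : fderiv ℝ W q (1, 0) = m * u q.1 q.2 ^ (m - 1) * S := by
      have h1 := slice_time (W := W) (t := q.1) (x := q.2) (hWq.differentiableAt (by simp))
      have h2 := heqn q hqU m
      have h3 := slice_lap (W := W) (t := q.1) (x := q.2) hWq
      rw [show spaceLap (fun y => u q.1 y ^ m) q.2 = S from h3] at h2
      exact h1.unique h2
    have hdiag : ∀ i, M ^ (-m) * fderiv ℝ (fderiv ℝ W) q (0, EuclideanSpace.single i 1)
          (0, EuclideanSpace.single i 1) - 2 / r ^ 2 ≤ 0 := by
      intro i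
      rw [← hd2 i]; exact hzd _
    have hsum : ∑ i : Fin d, (M ^ (-m) * fderiv ℝ (fderiv ℝ W) q (0, EuclideanSpace.single i 1)
          (0, EuclideanSpace.single i 1) - 2 / r ^ 2) = M ^ (-m) * S - 2 * d / r ^ 2 := by
      rw [Finset.sum_sub_distrib, ← Finset.mul_sum]
      simp
      ring
    have hσ : M ^ (-m) * S ≤ 2 * d / r ^ 2 := by
      have := Finset.sum_nonpos (s := Finset.univ) fun i _ => hdiag i
      rw [hsum] at this; linarith
    have hzt' : fderiv ℝ Z q (1, 0) = m * u q.1 q.2 ^ (m - 1) * (M ^ (-m) * S) + 1 / τ := by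
      rw [hd1, hWt]; ring
    rw [hzt'] at hzt ⊢
    obtain ⟨c1, c2⟩ := contact_arith hm0 hm1 hM hr hτ hκp hLp (hlow q hq hz.le) (hbd q hq)
      (Nat.cast_nonneg d) hzt hσ
    refine ⟨c1, fun i => ?_⟩
    rw [hd2 i, abs_of_nonpos (hdiag i)]
    have h5 : ∑ j : Fin d, (M ^ (-m) * fderiv ℝ (fderiv ℝ W) q (0, EuclideanSpace.single j 1)
          (0, EuclideanSpace.single j 1) - 2 / r ^ 2) ≤ (M ^ (-m) * fderiv ℝ (fderiv ℝ W) q (0, EuclideanSpace.single i 1)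
          (0, EuclideanSpace.single i 1) - 2 / r ^ 2) := by
      rw [← Finset.add_sum_erase _ _ (Finset.mem_univ i)]
      have := Finset.sum_nonpos (s := Finset.univ.erase i) fun j _ => hdiag j
      linarith
    rw [hsum] at h5
    linarith

lemma fderiv_scale {d : ℕ} {h : EuclideanSpace ℝ (Fin d) → ℝ} (hh : Differentiable ℝ h)
    (x0 x e : EuclideanSpace ℝ (Fin d)) (a : ℝ) :
    fderiv ℝ (fun y => h (a • (y - x0))) x e = a * fderiv ℝ h (a • (x - x0)) e := by
  have h1 : HasFDerivAt (fun y : EuclideanSpace ℝ (Fin d) => a • (y - x0))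
      (a • ContinuousLinearMap.id ℝ (EuclideanSpace ℝ (Fin d))) x :=
    ((hasFDerivAt_id x).sub_const x0).const_smul a
  have h2 := ((hh (a • (x - x0))).hasFDerivAt.comp x h1).fderiv
  change fderiv ℝ (h ∘ fun y => a • (y - x0)) x e = _
  rw [h2]
  simp

lemma spaceLap_scale {d : ℕ} {F : EuclideanSpace ℝ (Fin d) → ℝ} (hF : ContDiff ℝ 2 F)
    (x0 x : EuclideanSpace ℝ (Fin d)) (a : ℝ) :
    spaceLap (fun y => F (a • (y - x0))) x = a ^ 2 * spaceLap F (a • (x - x0)) := by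
  unfold spaceLap
  rw [Finset.mul_sum]
  refine Finset.sum_congr rfl fun i _ => ?_
  set e : EuclideanSpace ℝ (Fin d) := EuclideanSpace.single i 1
  have h1 : (fun y => fderiv ℝ (fun y => F (a • (y - x0))) y e) =
      fun y => a * (fun z => fderiv ℝ F z e) (a • (y - x0)) := by
    ext y
    exact fderiv_scale (hF.differentiable (by simp)) x0 y e a
  have hG : Differentiable ℝ (fun z => fderiv ℝ F z e) :=
    ((hF.fderiv_right (m := 1) (by norm_num)).clm_apply contDiff_const).differentiable (by simp)
  have hG2 : DifferentiableAt ℝ (fun y => (fun z => fderiv ℝ F z e) (a • (y - x0))) x := by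
    fun_prop
  rw [h1, fderiv_const_mul hG2, _root_.smul_apply, smul_eq_mul, fderiv_scale hG]
  ring

lemma cutoff (d : ℕ) {β : ℝ} (hβ1 : β < 1) : ∃ K : ℝ, 0 < K ∧
    ∀ (x0 : EuclideanSpace ℝ (Fin d)) (R : ℝ), 0 < R → ∃ φ : EuclideanSpace ℝ (Fin d) → ℝ,
      ContDiff ℝ 2 φ ∧ (∀ x, 0 ≤ φ x) ∧ (∀ x, φ x ≤ 1) ∧
      (∀ x ∈ closedBall x0 (3 / 2 * R), φ x = 1) ∧ (∀ x, x ∉ ball x0 (2 * R) → φ x = 0) ∧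
      tsupport φ ⊆ closedBall x0 (2 * R) ∧
      ∀ x, |spaceLap φ x| ≤ K / R ^ 2 * φ x ^ β := by
  let ψ : ContDiffBump (0 : EuclideanSpace ℝ (Fin d)) := ⟨3 / 2, 2, by norm_num, by norm_num⟩
  have hψ : ContDiff ℝ 2 ψ := ψ.contDiff
  obtain ⟨n, hn⟩ := exists_nat_ge (2 / (1 - β))
  set k := n + 2 with hk
  have hkβ : (k : ℝ) * β ≤ (n : ℝ) := by
    have h1 : 2 ≤ n * (1 - β) := by
      rwa [div_le_iff₀ (by linarith)] at hn
    have : (k : ℝ) = n + 2 := by simp [hk]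
    rw [this]; nlinarith
  set F : EuclideanSpace ℝ (Fin d) → ℝ := fun x => ψ x ^ k with hFdef
  have hF : ContDiff ℝ 2 F := hψ.pow k
  have hG : ∀ i : Fin d, ContDiff ℝ 1 (fun z => fderiv ℝ ψ z (EuclideanSpace.single i 1)) :=
    fun i => (hψ.fderiv_right (m := 1) (by norm_num)).clm_apply contDiff_const
  have hlap : ∀ x, spaceLap F x = ψ x ^ n * ∑ i : Fin d,
      (k * (k - 1) * (fderiv ℝ ψ x (EuclideanSpace.single i 1)) ^ 2 +
        k * ψ x * fderiv ℝ (fun z => fderiv ℝ ψ z (EuclideanSpace.single i 1)) x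
          (EuclideanSpace.single i 1)) := by
    intro x
    unfold spaceLap
    rw [Finset.mul_sum]
    refine Finset.sum_congr rfl fun i _ => ?_
    set e : EuclideanSpace ℝ (Fin d) := EuclideanSpace.single i 1
    have h1 : (fun y => fderiv ℝ F y e) = fun y => (k * ψ y ^ (n + 1)) * fderiv ℝ ψ y e := by
      ext y
      have := ((hψ.differentiable (by simp) y).hasFDerivAt.pow k).fderiv
      rw [hFdef, this]
      simp [hk]
    rw [h1]
    have h2 := (((hψ.differentiable (by simp) x).hasFDerivAt.pow (n+1)).const_mul (k:ℝ)).mul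
      (((hG i).differentiable (by simp)) x).hasFDerivAt
    rw [show fderiv ℝ (fun y => (k * ψ y ^ (n + 1)) * fderiv ℝ ψ y e) x = _ from h2.fderiv]
    simp [hk, e]
    ring
  set S : EuclideanSpace ℝ (Fin d) → ℝ := fun x => ∑ i : Fin d,
      (k * (k - 1) * (fderiv ℝ ψ x (EuclideanSpace.single i 1)) ^ 2 +
        k * ψ x * fderiv ℝ (fun z => fderiv ℝ ψ z (EuclideanSpace.single i 1)) x
          (EuclideanSpace.single i 1)) with hS
  have hSc : Continuous S := by
    refine continuous_finset_sum _ fun i _ => ?_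
    have h1 : Continuous fun x => fderiv ℝ (fun z => fderiv ℝ ψ z (EuclideanSpace.single i 1)) x
          (EuclideanSpace.single i 1) := ((hG i).continuous_fderiv (by simp)).clm_apply continuous_const
    have h2 := (hG i).continuous
    have h3 := hψ.continuous
    fun_prop
  obtain ⟨C, hC⟩ := (isCompact_closedBall (0 : EuclideanSpace ℝ (Fin d)) 2).exists_bound_of_continuousOn
    hSc.continuousOn
  refine ⟨|C| + 1, by positivity, fun x0 R hR => ⟨fun y => F (R⁻¹ • (y - x0)), ?_, ?_, ?_, ?_, ?_, ?_, ?_⟩⟩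
  · exact hF.comp (by fun_prop)
  · intro x; exact pow_nonneg ψ.nonneg _
  · intro x; exact pow_le_one₀ ψ.nonneg ψ.le_one
  · intro x hx
    have : ψ (R⁻¹ • (x - x0)) = 1 := by
      apply ψ.one_of_mem_closedBall
      rw [mem_closedBall_zero_iff, norm_smul, norm_inv, Real.norm_of_nonneg hR.le, ← dist_eq_norm]
      rw [mem_closedBall] at hx
      change _ ≤ (3 / 2 : ℝ)
      rw [inv_mul_le_iff₀ hR]; linarith
    simp only [hFdef, this, one_pow]
  · intro x hx
    have : ψ (R⁻¹ • (x - x0)) = 0 := by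
      apply ψ.zero_of_le_dist
      rw [dist_zero_right, norm_smul, norm_inv, Real.norm_of_nonneg hR.le, ← dist_eq_norm]
      rw [mem_ball, not_lt] at hx
      change (2 : ℝ) ≤ _
      rw [le_inv_mul_iff₀ hR]; linarith
    simp only [hFdef, this]; simp [hk]
  · apply closure_minimal _ isClosed_closedBall
    intro x hx
    by_contra hx2
    apply hx
    have : ψ (R⁻¹ • (x - x0)) = 0 := by
      apply ψ.zero_of_le_dist
      rw [dist_zero_right, norm_smul, norm_inv, Real.norm_of_nonneg hR.le, ← dist_eq_norm]
      rw [mem_closedBall, not_le] at hx2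
      change (2 : ℝ) ≤ _
      rw [le_inv_mul_iff₀ hR]; linarith
    simp only [hFdef, this]; simp [hk]
  · intro x
    rw [spaceLap_scale hF, hlap]
    change |_ * (_ * S _)| ≤ _
    set z := R⁻¹ • (x - x0)
    have hz0 : 0 ≤ ψ z := ψ.nonneg
    have h1 : ψ z ^ n ≤ (ψ z ^ k) ^ β ∨ ψ z = 0 := by
      rcases hz0.eq_or_lt with h | h
      · right; exact h.symm
      · left
        rw [← Real.rpow_natCast, ← Real.rpow_natCast, ← Real.rpow_mul hz0]
        exact Real.rpow_le_rpow_of_exponent_ge h ψ.le_one hkβ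
    have hF0 : 0 ≤ F z := pow_nonneg hz0 _
    have hn0 : n ≠ 0 := by
      rintro rfl
      have : 0 < 2 / (1 - β) := div_pos two_pos (by linarith)
      simp at hn; linarith
    rcases h1 with h1 | h1
    · by_cases hzb : z ∈ closedBall (0 : EuclideanSpace ℝ (Fin d)) 2
      · have h2 := hC z hzb
        rw [Real.norm_eq_abs] at h2
        have h3 : |S z| ≤ |C| + 1 := by linarith [le_abs_self C]
        rw [abs_mul, abs_mul, abs_of_nonneg (pow_nonneg hz0 n), abs_of_nonneg (by positivity)]
        calc R⁻¹ ^ 2 * (ψ z ^ n * |S z|) ≤ R⁻¹ ^ 2 * ((ψ z ^ k) ^ β * (|C| + 1)) := by gcongr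
          _ = _ := by simp only [hFdef]; rw [inv_pow, div_eq_mul_inv]; ring
      · have : ψ z = 0 := by
          apply ψ.zero_of_le_dist
          rw [mem_closedBall, not_le] at hzb
          exact hzb.le
        rw [this, zero_pow hn0]
        simp
        positivity
    · rw [h1, zero_pow hn0]
      simp
      positivity

lemma jensen_rpow {α : Type*} [MeasurableSpace α] {μ : Measure α} [IsFiniteMeasure μ] {s : α → ℝ}
    {β : ℝ} (hs : 0 ≤ᵐ[μ] s) (hi : Integrable s μ) (hβ0 : 0 < β) (hβ1 : β ≤ 1) :
    Integrable (fun x => s x ^ β) μ ∧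
      ∫ x, s x ^ β ∂μ ≤ (∫ x, s x ∂μ) ^ β * (μ.real univ) ^ (1 - β) := by
  have hint : Integrable (fun x => s x ^ β) μ := by
    refine Integrable.mono' (g := fun x => β * s x + (1 - β) * 1)
      ((hi.const_mul _).add (integrable_const _)) ?_ ?_
    · exact (hi.aestronglyMeasurable.aemeasurable.pow_const β).aestronglyMeasurable
    · filter_upwards [hs] with x hx
      have hx' : 0 ≤ s x := hx
      rw [Real.norm_of_nonneg (by positivity)]
      have := Real.geom_mean_le_arith_mean2_weighted hβ0.le (by linarith : 0 ≤ 1 - β) hx' zero_le_one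
        (by ring)
      simpa using this
  refine ⟨hint, ?_⟩
  set V := μ.real univ with hV
  set Y := ∫ x, s x ∂μ with hY
  have hY0 : 0 ≤ Y := integral_nonneg_of_ae hs
  have hV0 : 0 ≤ V := measureReal_nonneg
  rcases hY0.eq_or_lt with h0 | h0
  · have h1 : s =ᵐ[μ] 0 := (integral_eq_zero_iff_of_nonneg_ae hs hi).1 h0.symm
    have h2 : ∫ x, s x ^ β ∂μ = 0 := by
      rw [integral_eq_zero_of_ae]
      filter_upwards [h1] with x hx
      rw [hx]; simp [hβ0.ne']
    rw [h2]; positivity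
  · have hVp : 0 < V := by
      rcases hV0.eq_or_lt with h | h
      · exfalso
        have : μ = 0 := by
          rw [← Measure.measure_univ_eq_zero]
          rw [hV, eq_comm, measureReal_eq_zero_iff] at h
          exact h
        rw [hY, this, integral_zero_measure] at h0
        exact lt_irrefl _ h0
      · exact h
    set c := Y / V with hc
    have hcp : 0 < c := by positivity
    have h3 : ∫ x, s x ^ β * c ^ (1 - β) ∂μ ≤ ∫ x, (β * s x + (1 - β) * c) ∂μ := by
      apply integral_mono_ae (hint.mul_const _) ((hi.const_mul _).add (integrable_const _))
      filter_upwards [hs] with x hx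
      exact Real.geom_mean_le_arith_mean2_weighted hβ0.le (by linarith : 0 ≤ 1 - β) hx hcp.le (by ring)
    rw [integral_mul_const, integral_add (hi.const_mul _) (integrable_const _), integral_const_mul,
      integral_const, ← hY, ← hV, smul_eq_mul] at h3
    have h4 : β * Y + V * ((1 - β) * c) = Y := by rw [hc]; field_simp; ring
    rw [h4] at h3
    have h5 : (c ^ (1 - β)) * (Y ^ β * V ^ (1 - β)) = Y := by
      rw [hc, Real.div_rpow hY0 hV0]
      have : 0 < V ^ (1 - β) := by positivity
      field_simp
      rw [← Real.rpow_add h0]; simp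
    have h6 : 0 < c ^ (1 - β) := by positivity
    nlinarith

lemma supp_cont {d : ℕ} {Ω : Set (EuclideanSpace ℝ (Fin d))} (hΩ : IsOpen Ω)
    {h χ : EuclideanSpace ℝ (Fin d) → ℝ} (hh : ContinuousOn h Ω) (hχ : Continuous χ)
    (hc : HasCompactSupport χ) (hs : tsupport χ ⊆ Ω) :
    Continuous (fun x => h x * χ x) ∧ Integrable (fun x => h x * χ x) := by
  have h1 : Continuous (fun x => h x * χ x) := by
    apply continuous_of_tsupport
    intro x hx
    have : x ∈ tsupport χ := tsupport_mul_subset_right hx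
    exact (hh.continuousAt (hΩ.mem_nhds (hs this))).mul hχ.continuousAt
  exact ⟨h1, h1.integrable_of_hasCompactSupport hc.mul_left⟩

lemma ibp1 {d : ℕ} {Ω : Set (EuclideanSpace ℝ (Fin d))} (hΩ : IsOpen Ω)
    {f φ : EuclideanSpace ℝ (Fin d) → ℝ} (hf : ContDiffOn ℝ 1 f Ω) (hφ : ContDiff ℝ 1 φ)
    (hc : HasCompactSupport φ) (hs : tsupport φ ⊆ Ω) (e : EuclideanSpace ℝ (Fin d)) :
    ∫ x, f x * fderiv ℝ φ x e = - ∫ x, fderiv ℝ f x e * φ x := by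
  have hfd : ContinuousOn (fun x => fderiv ℝ f x e) Ω :=
    (hf.continuousOn_fderiv_of_isOpen hΩ le_rfl).clm_apply continuousOn_const
  have hφd : Continuous (fun x => fderiv ℝ φ x e) :=
    (hφ.continuous_fderiv (by simp)).clm_apply continuous_const
  apply integral_mul_fderiv_eq_neg_fderiv_mul_of_integrable
  · exact (supp_cont hΩ hfd hφ.continuous hc hs).2
  · exact (supp_cont hΩ hf.continuousOn hφd (hc.fderiv_apply ℝ e)
      ((tsupport_fderiv_apply_subset ℝ e).trans hs)).2
  · exact (supp_cont hΩ hf.continuousOn hφ.continuous hc hs).2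
  · intro x hx
    exact (hf.differentiableOn (by simp)).differentiableAt (hΩ.mem_nhds (hs hx))
  · intro x hx; exact hφ.differentiable (by simp) x

lemma ibp_lap {d : ℕ} {Ω : Set (EuclideanSpace ℝ (Fin d))} (hΩ : IsOpen Ω)
    {f φ : EuclideanSpace ℝ (Fin d) → ℝ} (hf : ContDiffOn ℝ 2 f Ω) (hφ : ContDiff ℝ 2 φ)
    (hc : HasCompactSupport φ) (hs : tsupport φ ⊆ Ω) :
    Integrable (fun x => spaceLap f x * φ x) ∧ Integrable (fun x => f x * spaceLap φ x) ∧ 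
    ∫ x, spaceLap f x * φ x = ∫ x, f x * spaceLap φ x := by
  have hfi : ∀ e, ContDiffOn ℝ 1 (fun x => fderiv ℝ f x e) Ω := fun e =>
    (hf.fderiv_of_isOpen hΩ (m := 1) (by norm_num)).clm_apply contDiffOn_const
  have hφi : ∀ e, ContDiff ℝ 1 (fun x => fderiv ℝ φ x e) := fun e =>
    (hφ.fderiv_right (m := 1) (by norm_num)).clm_apply contDiff_const
  have hfii : ∀ e, ContinuousOn (fun x => fderiv ℝ (fun y => fderiv ℝ f y e) x e) Ω := fun e =>
    ((hfi e).continuousOn_fderiv_of_isOpen hΩ le_rfl).clm_apply continuousOn_const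
  have hφii : ∀ e, Continuous (fun x => fderiv ℝ (fun y => fderiv ℝ φ y e) x e) := fun e =>
    ((hφi e).continuous_fderiv (by simp)).clm_apply continuous_const
  have hci : ∀ e, HasCompactSupport (fun x => fderiv ℝ φ x e) := fun e => hc.fderiv_apply ℝ e
  have hsi : ∀ e, tsupport (fun x => fderiv ℝ φ x e) ⊆ tsupport φ := 
    fun e => tsupport_fderiv_apply_subset ℝ e
  have i1 : ∀ i : Fin d, Integrable (fun x => fderiv ℝ (fun y => fderiv ℝ f y (EuclideanSpace.single i 1)) x
      (EuclideanSpace.single i 1) * φ x) := fun i =>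
    (supp_cont hΩ (hfii _) hφ.continuous hc hs).2
  have i2 : ∀ i : Fin d, Integrable (fun x => f x * fderiv ℝ (fun y => fderiv ℝ φ y (EuclideanSpace.single i 1)) x
      (EuclideanSpace.single i 1)) := fun i =>
    (supp_cont hΩ hf.continuousOn (hφii _) ((hci _).fderiv_apply ℝ _)
      ((tsupport_fderiv_apply_subset ℝ _).trans ((hsi _).trans hs))).2
  unfold spaceLap
  simp only [Finset.sum_mul, Finset.mul_sum]
  refine ⟨integrable_finset_sum _ fun i _ => i1 i, integrable_finset_sum _ fun i _ => i2 i, ?_⟩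
  rw [integral_finset_sum _ fun i _ => i1 i, integral_finset_sum _ fun i _ => i2 i]
  refine Finset.sum_congr rfl fun i _ => ?_
  set e : EuclideanSpace ℝ (Fin d) := EuclideanSpace.single i 1
  have h1 := ibp1 hΩ (hf.of_le (by norm_num)) (hφi e) (hci e) ((hsi e).trans hs) e
  have h2 := ibp1 hΩ (hfi e) (hφ.of_le (by norm_num)) hc hs e
  rw [h1, h2, neg_neg]

lemma time_deriv {d : ℕ} {Ω : Set (EuclideanSpace ℝ (Fin d))} (hΩ : IsOpen Ω) {a b : ℝ}
    {G : ℝ × EuclideanSpace ℝ (Fin d) → ℝ} (hG : ContDiffOn ℝ 1 G (Ioo a b ×ˢ Ω))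
    {φ : EuclideanSpace ℝ (Fin d) → ℝ} (hφ : Continuous φ)
    (hc : HasCompactSupport φ) (hs : tsupport φ ⊆ Ω) {t : ℝ} (ht : t ∈ Ioo a b) :
    Integrable (fun x => fderiv ℝ G (t, x) (1, 0) * φ x) ∧
    HasDerivAt (fun s => ∫ x, G (s, x) * φ x) (∫ x, fderiv ℝ G (t, x) (1, 0) * φ x) t := by
  have hop : IsOpen (Ioo a b ×ˢ Ω) := isOpen_Ioo.prod hΩ
  obtain ⟨ε, hε, hεs⟩ : ∃ ε > 0, Icc (t - ε) (t + ε) ⊆ Ioo a b := by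
    refine ⟨min (t - a) (b - t) / 2, ?_, ?_⟩
    · have := lt_min (sub_pos.2 ht.1) (sub_pos.2 ht.2); linarith
    · intro s hs
      have h0 := lt_min (sub_pos.2 ht.1) (sub_pos.2 ht.2)
      have h1 := min_le_left (t - a) (b - t)
      have h2 := min_le_right (t - a) (b - t)
      constructor <;> linarith [hs.1, hs.2]
  have hGt : ContinuousOn (fun q => fderiv ℝ G q (1, 0)) (Ioo a b ×ˢ Ω) :=
    (hG.continuousOn_fderiv_of_isOpen hop le_rfl).clm_apply continuousOn_const
  have hsub : Icc (t - ε) (t + ε) ×ˢ tsupport φ ⊆ Ioo a b ×ˢ Ω := Set.prod_mono hεs hs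
  obtain ⟨C, hC⟩ := (isCompact_Icc.prod hc.isCompact).exists_bound_of_continuousOn (hGt.mono hsub)
  have hslice : ∀ s ∈ Ioo a b, ∀ {H : ℝ × EuclideanSpace ℝ (Fin d) → ℝ},
      ContinuousOn H (Ioo a b ×ˢ Ω) → ContinuousOn (fun x => H (s, x)) Ω := by
    intro s hs H hH
    exact hH.comp (by fun_prop) fun x hx => Set.mk_mem_prod hs hx
  refine hasDerivAt_integral_of_dominated_loc_of_deriv_le (F := fun s x => G (s, x) * φ x)
    (F' := fun s x => fderiv ℝ G (s, x) (1, 0) * φ x) (s := Icc (t - ε) (t + ε))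
    (bound := fun x => C * ‖φ x‖)
    (Icc_mem_nhds (by linarith) (by linarith)) ?_ ?_ ?_ ?_ ?_ ?_
  · filter_upwards [isOpen_Ioo.mem_nhds ht] with s hs1
    exact (supp_cont hΩ (hslice s hs1 hG.continuousOn) hφ hc hs).2.aestronglyMeasurable
  · exact (supp_cont hΩ (hslice t ht hG.continuousOn) hφ hc hs).2
  · exact (supp_cont hΩ (hslice t ht hGt) hφ hc hs).2.aestronglyMeasurable
  · refine Filter.Eventually.of_forall fun x s hs1 => ?_
    rw [norm_mul]
    by_cases hx : x ∈ tsupport φ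
    · have := hC (s, x) (Set.mk_mem_prod hs1 hx)
      gcongr
    · rw [image_eq_zero_of_notMem_tsupport hx]; simp
  · exact ((hφ.norm).integrable_of_hasCompactSupport hc.norm).const_mul C
  · refine Filter.Eventually.of_forall fun x s hs1 => ?_
    by_cases hx : x ∈ tsupport φ
    · have hd : DifferentiableAt ℝ G (s, x) := (hG.differentiableOn (by simp)).differentiableAt
        (hop.mem_nhds (Set.mk_mem_prod (hεs hs1) (hs hx)))
      exact (slice_time hd).mul_const _
    · rw [image_eq_zero_of_notMem_tsupport hx]
      simpa using hasDerivAt_const s (0:ℝ)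

lemma Y_cont {d : ℕ} {Ω : Set (EuclideanSpace ℝ (Fin d))} (hΩ : IsOpen Ω) {S : Set ℝ}
    {G : ℝ × EuclideanSpace ℝ (Fin d) → ℝ} (hG : ContinuousOn G (S ×ˢ Ω))
    {φ : EuclideanSpace ℝ (Fin d) → ℝ} (hφ : Continuous φ)
    (hc : HasCompactSupport φ) (hs : tsupport φ ⊆ Ω) :
    ContinuousOn (fun s => ∫ x, G (s, x) * φ x) S := by
  refine continuousOn_integral_of_compact_support (f := fun s x => G (s, x) * φ x)
    (k := tsupport φ) hc.isCompact ?_ ?_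
  · rintro ⟨s, x⟩ hsx
    have hsS : s ∈ S := (Set.mem_prod.1 hsx).1
    by_cases hx : x ∈ tsupport φ
    · have h1 : ContinuousWithinAt G (S ×ˢ univ) (s, x) := by
        refine (hG (s, x) (Set.mk_mem_prod hsS (hs hx))).mono_of_mem_nhdsWithin ?_
        have : (univ : Set ℝ) ×ˢ Ω ∈ nhds (s, x) :=
          (isOpen_univ.prod hΩ).mem_nhds (Set.mk_mem_prod (mem_univ _) (hs hx))
        filter_upwards [self_mem_nhdsWithin, mem_nhdsWithin_of_mem_nhds this] with q h1 h2
        exact Set.mk_mem_prod (Set.mem_prod.1 h1).1 (Set.mem_prod.1 h2).2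
      have h2 : ContinuousWithinAt (fun q : ℝ × EuclideanSpace ℝ (Fin d) => φ q.2) (S ×ˢ univ) (s, x) :=
        (hφ.comp continuous_snd).continuousWithinAt
      exact h1.mul h2
    · have h1 : ∀ᶠ q in nhds ((s, x) : ℝ × EuclideanSpace ℝ (Fin d)),
          (Function.uncurry fun s x => G (s, x) * φ x) q = 0 := by
        have : (univ : Set ℝ) ×ˢ (tsupport φ)ᶜ ∈ nhds (s, x) :=
          (isOpen_univ.prod (isClosed_tsupport φ).isOpen_compl).mem_nhds
            (Set.mk_mem_prod (mem_univ _) hx)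
        filter_upwards [this] with q hq
        have := image_eq_zero_of_notMem_tsupport (Set.mem_prod.1 hq).2
        simp [Function.uncurry, this]
      have h2 : ContinuousAt (Function.uncurry fun s x => G (s, x) * φ x) (s, x) :=
        continuousAt_const.congr (f := fun _ => (0:ℝ)) (h1.mono fun q hq => hq.symm)
      exact h2.continuousWithinAt
  · intro s x _ hx
    simp [image_eq_zero_of_notMem_tsupport hx]

set_option maxHeartbeats 1000000 in
lemma int_ineq {d : ℕ} {Ω : Set (EuclideanSpace ℝ (Fin d))} (hΩ : IsOpen Ω) {a b : ℝ}
    {G H : ℝ × EuclideanSpace ℝ (Fin d) → ℝ} {σ c0 β K R : ℝ} {x0 : EuclideanSpace ℝ (Fin d)}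
    {φ : EuclideanSpace ℝ (Fin d) → ℝ} 
    (hGc : ContinuousOn G (Icc a b ×ˢ Ω)) (hGp : ∀ q ∈ Ioo a b ×ˢ Ω, 0 < G q)
    (hG : ContDiffOn ℝ 1 G (Ioo a b ×ˢ Ω)) (hH : ContDiffOn ℝ 2 H (Ioo a b ×ˢ Ω))
    (hineq : ∀ t ∈ Ioo a b, ∀ x ∈ Ω, σ * fderiv ℝ G (t, x) (1, 0) ≤ spaceLap (fun y => H (t, y)) x)
    (hHb : ∀ q ∈ Ioo a b ×ˢ Ω, |H q| ≤ c0 * G q ^ β) (hc0 : 0 ≤ c0) (hβ0 : 0 < β) (hβ1 : β < 1)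
    (hR : 0 < R) (hK : 0 < K) (hφ : ContDiff ℝ 2 φ) (hφ0 : ∀ x, 0 ≤ φ x)
    (hφ1 : ∀ x ∈ closedBall x0 (3 / 2 * R), φ x = 1) (hφz : ∀ x, x ∉ ball x0 (2 * R) → φ x = 0)
    (hts : tsupport φ ⊆ closedBall x0 (2 * R))
    (hlap : ∀ x, |spaceLap φ x| ≤ K / R ^ 2 * φ x ^ β)
    (hB : closedBall x0 (2 * R) ⊆ Ω) :
    ∀ s ∈ Icc a b, ∀ t ∈ Icc a b, s ≤ t →
      σ * ((∫ x, G (t, x) * φ x) ^ (1 - β) - (∫ x, G (s, x) * φ x) ^ (1 - β)) ≤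
      (1 - β) * (c0 * (K / R ^ 2) * (volume.real (ball x0 (2 * R))) ^ (1 - β)) * (t - s) := by
  have hc : HasCompactSupport φ :=
    (isCompact_closedBall x0 (2 * R)).of_isClosed_subset (isClosed_tsupport φ) hts
  have hs : tsupport φ ⊆ Ω := hts.trans hB
  set Y : ℝ → ℝ := fun s => ∫ x, G (s, x) * φ x with hY
  set V := volume.real (ball x0 (2 * R)) with hV
  set N := (1 - β) * (c0 * (K / R ^ 2) * V ^ (1 - β)) with hN
  have hYc : ContinuousOn Y (Icc a b) := Y_cont hΩ hGc hφ.continuous hc hs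
  have hslice : ∀ t ∈ Ioo a b, ∀ {F : ℝ × EuclideanSpace ℝ (Fin d) → ℝ},
      ContinuousOn F (Ioo a b ×ˢ Ω) → ContinuousOn (fun x => F (t, x)) Ω := by
    intro s hs H hH
    exact hH.comp (by fun_prop) fun x hx => Set.mk_mem_prod hs hx
  -- derivative bound
  have hder : ∀ t ∈ Ioo a b, ∃ y', HasDerivAt Y y' t ∧ 0 < Y t ∧
      σ * y' ≤ c0 * (K / R ^ 2) * (Y t ^ β * V ^ (1 - β)) := by
    intro t ht
    obtain ⟨hi1, hd1⟩ := time_deriv hΩ hG hφ.continuous hc hs ht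
    have hHt : ContDiffOn ℝ 2 (fun y => H (t, y)) Ω :=
      hH.comp (by fun_prop) fun x hx => Set.mk_mem_prod ht hx
    obtain ⟨hi2, hi3, he⟩ := ibp_lap hΩ hHt hφ hc hs
    obtain ⟨hc4, hi4⟩ := supp_cont hΩ (hslice t ht hG.continuousOn) hφ.continuous hc hs
    have hnn : ∀ x, 0 ≤ G (t, x) * φ x := by
      intro x
      by_cases hx : x ∈ Ω
      · exact mul_nonneg (hGp (t, x) (Set.mk_mem_prod ht hx)).le (hφ0 x)
      · rw [image_eq_zero_of_notMem_tsupport fun h => hx (hs h), mul_zero]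
    have hx0 : x0 ∈ Ω := hB (mem_closedBall_self (by positivity))
    have hYp : 0 < Y t := by
      refine hc4.integral_pos_of_hasCompactSupport_nonneg_nonzero hc.mul_left hnn (x := x0) ?_
      rw [hφ1 x0 (mem_closedBall_self (by positivity)), mul_one]
      exact (hGp (t, x0) (Set.mk_mem_prod ht hx0)).ne'
    refine ⟨_, hd1, hYp, ?_⟩
    have hz : ∀ x, x ∉ ball x0 (2 * R) → (G (t, x) * φ x) = 0 := by
      intro x hx; rw [hφz x hx, mul_zero]
    haveI : IsFiniteMeasure (volume.restrict (ball x0 (2 * R))) :=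
      ⟨by rw [Measure.restrict_apply_univ]; exact measure_ball_lt_top⟩
    obtain ⟨j1, j2⟩ := jensen_rpow (μ := volume.restrict (ball x0 (2 * R)))
      (s := fun x => G (t, x) * φ x) (Filter.Eventually.of_forall hnn) hi4.restrict hβ0 hβ1.le
    have hVe : (volume.restrict (ball x0 (2 * R))).real univ = V := by
      simp [hV, Measure.real]
    rw [hVe, setIntegral_eq_integral_of_forall_compl_eq_zero hz] at j2
    have hz2 : ∀ x, x ∉ ball x0 (2 * R) → H (t, x) * spaceLap φ x = 0 := by
      intro x hx
      have := hlap x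
      rw [hφz x hx, Real.zero_rpow hβ0.ne', mul_zero] at this
      rw [abs_nonpos_iff.1 this, mul_zero]
    calc σ * ∫ x, fderiv ℝ G (t, x) (1, 0) * φ x
        = ∫ x, σ * (fderiv ℝ G (t, x) (1, 0) * φ x) := by rw [integral_const_mul]
      _ ≤ ∫ x, spaceLap (fun y => H (t, y)) x * φ x := by
          apply integral_mono (hi1.const_mul σ) hi2
          intro x
          by_cases hx : x ∈ Ω
          · have := mul_le_mul_of_nonneg_right (hineq t ht x hx) (hφ0 x)
            simpa [mul_assoc] using this
          · simp [image_eq_zero_of_notMem_tsupport fun h => hx (hs h)]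
      _ = ∫ x in ball x0 (2 * R), H (t, x) * spaceLap φ x := by
          rw [he, setIntegral_eq_integral_of_forall_compl_eq_zero hz2]
      _ ≤ ∫ x in ball x0 (2 * R), c0 * (K / R ^ 2) * (G (t, x) * φ x) ^ β := by
          apply setIntegral_mono_on hi3.integrableOn (j1.const_mul _) measurableSet_ball
          intro x hx
          have hxΩ : x ∈ Ω := hB (ball_subset_closedBall hx)
          have h1 := hHb (t, x) (Set.mk_mem_prod ht hxΩ)
          have h2 := hlap x
          have h3 := hGp (t, x) (Set.mk_mem_prod ht hxΩ)
          rw [Real.mul_rpow h3.le (hφ0 x)]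
          calc _ ≤ |H (t, x) * spaceLap φ x| := le_abs_self _
            _ = |H (t, x)| * |spaceLap φ x| := abs_mul _ _
            _ ≤ (c0 * G (t, x) ^ β) * (K / R ^ 2 * φ x ^ β) := by gcongr
            _ = _ := by ring
      _ = c0 * (K / R ^ 2) * ∫ x in ball x0 (2 * R), (G (t, x) * φ x) ^ β := integral_const_mul _ _
      _ ≤ _ := by gcongr
  have hV0 : 0 ≤ V := measureReal_nonneg
  have hanti : AntitoneOn (fun t => σ * Y t ^ (1 - β) - N * t) (Icc a b) := by
    have hda : ∀ t ∈ Ioo a b, ∃ y, HasDerivAt (fun t => σ * Y t ^ (1 - β) - N * t) y t ∧ y ≤ 0 := by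
      intro t ht
      obtain ⟨y', h1, h2, h3⟩ := hder t ht
      refine ⟨_, ((h1.rpow_const (p := 1 - β) (Or.inl h2.ne')).const_mul σ).sub
        ((hasDerivAt_id t).const_mul N), ?_⟩
      have h4 : 0 < Y t ^ (1 - β - 1) := by positivity
      have h5 : Y t ^ (1 - β - 1) * Y t ^ β = 1 := by
        rw [← Real.rpow_add h2]; simp
      have h6 : (1 - β) * Y t ^ (1 - β - 1) * (σ * y') ≤
          (1 - β) * Y t ^ (1 - β - 1) * (c0 * (K / R ^ 2) * (Y t ^ β * V ^ (1 - β))) := by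
        have : 0 < 1 - β := by linarith
        gcongr
      have h7 : (1 - β) * Y t ^ (1 - β - 1) * (c0 * (K / R ^ 2) * (Y t ^ β * V ^ (1 - β))) = N := by
        rw [hN]; linear_combination (1 - β) * (c0 * (K / R ^ 2) * (V ^ (1 - β))) * h5
      linarith
    apply antitoneOn_of_deriv_nonpos (convex_Icc a b)
    · have : ContinuousOn (fun t => Y t ^ (1 - β)) (Icc a b) :=
        hYc.rpow_const fun x _ => Or.inr (by linarith)
      fun_prop
    · rw [interior_Icc]
      intro t ht
      obtain ⟨y, h1, _⟩ := hda t ht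
      exact h1.differentiableAt.differentiableWithinAt
    · rw [interior_Icc]
      intro t ht
      obtain ⟨y, h1, h2⟩ := hda t ht
      rw [h1.deriv]; exact h2
  intro s hs t ht hst
  have := hanti hs ht hst
  simp only at this
  linarith

lemma spaceLap_const_mul {d : ℕ} (c : ℝ) (f : EuclideanSpace ℝ (Fin d) → ℝ)
    (x : EuclideanSpace ℝ (Fin d)) : spaceLap (fun y => c * f y) x = c * spaceLap f x := by
  unfold spaceLap
  rw [Finset.mul_sum]
  refine Finset.sum_congr rfl fun i _ => ?_
  have h : ∀ (g : EuclideanSpace ℝ (Fin d) → ℝ) y, fderiv ℝ (fun y => c * g y) y = c • fderiv ℝ g y :=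
    fun g y => congrFun (fderiv_const_smul_field c (f := g)) y
  simp only [h, _root_.smul_apply, smul_eq_mul]

lemma lap_rpow {d : ℕ} {w : EuclideanSpace ℝ (Fin d) → ℝ} {x : EuclideanSpace ℝ (Fin d)} {k : ℝ}
    (hk : 1 ≤ k) (hw : ContDiffAt ℝ 2 w x) (hp : 0 < w x) :
    k * w x ^ (k - 1) * spaceLap w x ≤ spaceLap (fun y => w y ^ k) x := by
  unfold spaceLap
  rw [Finset.mul_sum]
  refine Finset.sum_le_sum fun i _ => ?_
  set e : EuclideanSpace ℝ (Fin d) := EuclideanSpace.single i 1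
  have h1 : (fun y => fderiv ℝ (fun y => w y ^ k) y e) =ᶠ[nhds x]
      fun y => (k * w y ^ (k - 1)) * fderiv ℝ w y e := by
    filter_upwards [hw.eventually (by simp), hw.continuousAt.eventually (lt_mem_nhds hp)] with y hy hy2
    have := ((hy.differentiableAt (by simp)).hasFDerivAt.rpow_const (p := k) (Or.inl hy2.ne')).fderiv
    rw [this]
    simp
  rw [h1.fderiv_eq]
  have hG : DifferentiableAt ℝ (fun y => fderiv ℝ w y e) x :=
    ((hw.fderiv_right (m := 1) (by norm_num)).clm_apply contDiffAt_const).differentiableAt (by simp)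
  have h2 := (((hw.differentiableAt (by simp)).hasFDerivAt.rpow_const (p := k - 1)
    (Or.inl hp.ne')).const_mul k).mul hG.hasFDerivAt
  rw [show fderiv ℝ (fun y => (k * w y ^ (k - 1)) * fderiv ℝ w y e) x = _ from h2.fderiv]
  simp only [_root_.add_apply, _root_.smul_apply, smul_eq_mul]
  have h3 : 0 ≤ fderiv ℝ w x e * (k * ((k - 1) * w x ^ (k - 1 - 1) * fderiv ℝ w x e)) := by
    have : 0 ≤ k * ((k - 1) * w x ^ (k - 1 - 1)) := by
      have : 0 ≤ k - 1 := by linarith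
      have : 0 ≤ k := by linarith
      positivity
    nlinarith [mul_nonneg this (sq_nonneg (fderiv ℝ w x e))]
  linarith

lemma stab_raw {d : ℕ} {m p : ℝ} (hm0 : 0 < m) (hm1 : m < 1) (hp : 1 ≤ p)
    {Ω : Set (EuclideanSpace ℝ (Fin d))} (hΩ : IsOpen Ω)
    {u : ℝ → EuclideanSpace ℝ (Fin d) → ℝ} {T : ℝ} (hu : IsFDESol m (Ioo 0 T ×ˢ Ω) u)
    (hc : ContinuousOn (fun q : ℝ × EuclideanSpace ℝ (Fin d) => u q.1 q.2) (Icc 0 T ×ˢ Ω))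
    {t₀ : ℝ} (ht0 : 0 ≤ t₀) {K R : ℝ} {x0 : EuclideanSpace ℝ (Fin d)}
    {φ : EuclideanSpace ℝ (Fin d) → ℝ} 
    (hR : 0 < R) (hK : 0 < K) (hφ : ContDiff ℝ 2 φ) (hφ0 : ∀ x, 0 ≤ φ x)
    (hφ1 : ∀ x ∈ closedBall x0 (3 / 2 * R), φ x = 1) (hφz : ∀ x, x ∉ ball x0 (2 * R) → φ x = 0)
    (hts : tsupport φ ⊆ closedBall x0 (2 * R))
    (hlap : ∀ x, |spaceLap φ x| ≤ K / R ^ 2 * φ x ^ (1 - (1 - m) / p))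
    (hB : closedBall x0 (2 * R) ⊆ Ω) {t : ℝ} (ht : t ∈ Icc t₀ T) :
    (∫ x, u t x ^ p * φ x) ^ ((1 - m) / p) ≤ (∫ x, u t₀ x ^ p * φ x) ^ ((1 - m) / p) +
      (1 - m) / p * (p * m / (p + m - 1) * (K / R ^ 2) *
        (volume.real (ball x0 (2 * R))) ^ ((1 - m) / p)) * (t - t₀) := by
  obtain ⟨hop, hsm, heqn⟩ := fde_W hΩ hu
  have hq : 0 < p + m - 1 := by linarith
  have hp0 : 0 < p := by linarith
  have hsub : Ioo t₀ T ×ˢ Ω ⊆ Ioo 0 T ×ˢ Ω := Set.prod_mono (Ioo_subset_Ioo_left ht0) le_rfl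
  have hα0 : 0 < (1 - m) / p := div_pos (by linarith) hp0
  have hα1 : (1 - m) / p < 1 := by rw [div_lt_one hp0]; linarith
  have := int_ineq (σ := 1) (β := 1 - (1 - m) / p) hΩ (a := t₀) (b := T)
    (G := fun q => u q.1 q.2 ^ p) (H := fun q => (p * m / (p + m - 1)) * u q.1 q.2 ^ (p + m - 1))
    (c0 := p * m / (p + m - 1)) 
    ((hc.mono (Set.prod_mono (Icc_subset_Icc_left ht0) le_rfl)).rpow_const
      fun x _ => Or.inr hp0.le) ?_ (((hsm p).mono hsub).of_le (by norm_num))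
    (contDiffOn_const.mul ((hsm _).mono hsub)) ?_ ?_ (by positivity) (by linarith) (by linarith) hR hK hφ hφ0 hφ1
    hφz hts hlap hB t₀ ⟨le_rfl, ht.1.trans ht.2⟩ t ht ht.1
  · rw [sub_sub_cancel] at this
    simp only at this
    linarith
  · intro q hq
    exact Real.rpow_pos_of_pos (hu.1 q (hsub hq)) _
  · intro t ht x hx
    have hqm : (t, x) ∈ Ioo 0 T ×ˢ Ω := hsub (Set.mk_mem_prod ht hx)
    have hpos : 0 < u t x := hu.1 _ hqm
    have h1 := slice_time (W := fun q => u q.1 q.2 ^ p) (t := t) (x := x)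
      (((hsm p).contDiffAt (hop.mem_nhds hqm)).differentiableAt (by simp))
    have h2 := h1.unique (heqn (t, x) hqm p)
    rw [h2]
    have hw : ContDiffAt ℝ 2 (fun y => u t y ^ m) x :=
      ((hsm m).contDiffAt (hop.mem_nhds hqm)).comp (f := fun y => (t, y)) x (by fun_prop)
    have h3 := lap_rpow (k := (p + m - 1) / m) (w := fun y => u t y ^ m) (x := x)
      (by rw [one_le_div hm0]; linarith) hw (by positivity)
    rw [spaceLap_const_mul]
    have h4 : spaceLap (fun y => u t y ^ (p + m - 1)) x =
        spaceLap (fun y => (u t y ^ m) ^ ((p + m - 1) / m)) x := by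
      have hev : (fun y => u t y ^ (p + m - 1)) =ᶠ[nhds x] fun y => (u t y ^ m) ^ ((p + m - 1) / m) := by
        filter_upwards [hΩ.mem_nhds hx] with y hy
        have : 0 < u t y := hu.1 (t, y) (hsub (Set.mk_mem_prod ht hy))
        rw [← Real.rpow_mul this.le]; congr 1; field_simp
      unfold spaceLap
      refine Finset.sum_congr rfl fun i _ => ?_
      have hev2 : (fun y => fderiv ℝ (fun y => u t y ^ (p + m - 1)) y (EuclideanSpace.single i 1)) =ᶠ[nhds x]
        (fun y => fderiv ℝ (fun y => (u t y ^ m) ^ ((p + m - 1) / m)) y (EuclideanSpace.single i 1)) := by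
        filter_upwards [hev.fderiv (𝕜 := ℝ)] with y hy
        rw [hy]
      rw [hev2.fderiv_eq]
    rw [h4]
    have h5 : (u t x ^ m) ^ ((p + m - 1) / m - 1) = u t x ^ (p - 1) := by
      rw [← Real.rpow_mul hpos.le]; congr 1; field_simp; ring
    rw [h5] at h3
    have h6 := mul_le_mul_of_nonneg_left h3 (by positivity : 0 ≤ p * m / (p + m - 1))
    refine le_trans (le_of_eq ?_) h6
    simp only
    field_simp
  · intro q hq
    have hpos : 0 < u q.1 q.2 := hu.1 q (hsub hq)
    rw [abs_of_nonneg (by positivity), ← Real.rpow_mul hpos.le]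
    apply le_of_eq
    congr 2
    field_simp; ring

lemma ext_raw {d : ℕ} {m : ℝ} (hm0 : 0 < m) (hm1 : m < 1)
    {Ω : Set (EuclideanSpace ℝ (Fin d))} (hΩ : IsOpen Ω)
    {u : ℝ → EuclideanSpace ℝ (Fin d) → ℝ} {T : ℝ} (hu : IsFDESol m (Ioo 0 T ×ˢ Ω) u)
    (hc : ContinuousOn (fun q : ℝ × EuclideanSpace ℝ (Fin d) => u q.1 q.2) (Icc 0 T ×ˢ Ω))
    (hT : ∀ x ∈ Ω, u T x = 0)
    {t₀ : ℝ} (ht0 : 0 ≤ t₀) (ht0T : t₀ < T) {K R : ℝ} {x0 : EuclideanSpace ℝ (Fin d)}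
    {φ : EuclideanSpace ℝ (Fin d) → ℝ} 
    (hR : 0 < R) (hK : 0 < K) (hφ : ContDiff ℝ 2 φ) (hφ0 : ∀ x, 0 ≤ φ x)
    (hφ1 : ∀ x ∈ closedBall x0 (3 / 2 * R), φ x = 1) (hφz : ∀ x, x ∉ ball x0 (2 * R) → φ x = 0)
    (hts : tsupport φ ⊆ closedBall x0 (2 * R))
    (hlap : ∀ x, |spaceLap φ x| ≤ K / R ^ 2 * φ x ^ m)
    (hB : closedBall x0 (2 * R) ⊆ Ω) :
    (∫ x, u t₀ x * φ x) ^ (1 - m) ≤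
      (1 - m) * (1 * (K / R ^ 2) * (volume.real (ball x0 (2 * R))) ^ (1 - m)) * (T - t₀) := by
  obtain ⟨hop, hsm, heqn⟩ := fde_W hΩ hu
  have hsub : Ioo t₀ T ×ˢ Ω ⊆ Ioo 0 T ×ˢ Ω := Set.prod_mono (Ioo_subset_Ioo_left ht0) le_rfl
  have h1s : ContDiffOn ℝ 2 (fun q : ℝ × EuclideanSpace ℝ (Fin d) => u q.1 q.2) (Ioo t₀ T ×ˢ Ω) := by
    simpa using (hsm 1).mono hsub
  have := int_ineq (σ := -1) (β := m) hΩ (a := t₀) (b := T)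
    (G := fun q => u q.1 q.2) (H := fun q => (-1) * u q.1 q.2 ^ m)
    (c0 := 1) 
    (hc.mono (Set.prod_mono (Icc_subset_Icc_left ht0) le_rfl)) (fun q hq => hu.1 q (hsub hq))
    (h1s.of_le (by norm_num))
    (contDiffOn_const.mul ((hsm _).mono hsub)) ?_ ?_ (by positivity) hm0 hm1 hR hK hφ hφ0 hφ1
    hφz hts hlap hB t₀ ⟨le_rfl, ht0T.le⟩ T ⟨ht0T.le, le_rfl⟩ ht0T.le
  · have hz : ∫ x, u T x * φ x = 0 := by
      rw [← integral_zero (α := EuclideanSpace ℝ (Fin d)) (G := ℝ) (μ := volume)]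
      congr 1
      ext x
      by_cases hx : x ∈ Ω
      · rw [hT x hx, zero_mul]
      · rw [image_eq_zero_of_notMem_tsupport fun h => hx (hB (hts h)), mul_zero]
    simp only [hz] at this
    rw [Real.zero_rpow (by linarith)] at this
    linarith
  · intro t ht x hx
    have hqm : (t, x) ∈ Ioo 0 T ×ˢ Ω := hsub (Set.mk_mem_prod ht hx)
    have h1 := slice_time (W := fun q => u q.1 q.2) (t := t) (x := x)
      ((h1s.contDiffAt ((isOpen_Ioo.prod hΩ).mem_nhds (Set.mk_mem_prod ht hx))).differentiableAt (by simp))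
    have h2 : deriv (fun s => u s x) t = spaceLap (fun y => u t y ^ m) x := hu.2.2 _ hqm
    have h3 : deriv (fun s => u s x) t = _ := h1.deriv
    rw [← h3, h2, spaceLap_const_mul]
  · intro q hq
    have hpos : 0 < u q.1 q.2 := hu.1 q (hsub hq)
    rw [abs_mul, abs_neg, abs_one, abs_of_pos (by positivity)]

lemma vol_ball_real (d : ℕ) (x0 : EuclideanSpace ℝ (Fin d)) {ρ : ℝ} (hρ : 0 < ρ) :
    volume.real (ball x0 ρ) = ρ ^ d * volume.real (ball (0 : EuclideanSpace ℝ (Fin d)) 1) := by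
  unfold Measure.real
  rw [Measure.addHaar_ball_of_pos volume x0 hρ, ENNReal.toReal_mul, ENNReal.toReal_ofReal (by positivity)]
  simp

lemma vol_one_pos (d : ℕ) : 0 < volume.real (ball (0 : EuclideanSpace ℝ (Fin d)) 1) :=
  ENNReal.toReal_pos (measure_ball_pos volume _ one_pos).ne' measure_ball_lt_top.ne

lemma vol_rpow (d : ℕ) (x0 : EuclideanSpace ℝ (Fin d)) {k R : ℝ} (hk : 0 < k) (hR : 0 < R) (a : ℝ) :
    volume.real (ball x0 (k * R)) ^ a =
      (k ^ d * volume.real (ball (0 : EuclideanSpace ℝ (Fin d)) 1)) ^ a * R ^ (d * a) := by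
  have h1 := vol_one_pos d
  rw [vol_ball_real d x0 (by positivity), mul_pow, mul_right_comm, Real.mul_rpow (by positivity)
    (by positivity), Real.rpow_mul hR.le, Real.rpow_natCast]

lemma set_int_mono {d : ℕ} {Ω : Set (EuclideanSpace ℝ (Fin d))} {g : EuclideanSpace ℝ (Fin d) → ℝ}
    (hg : ContinuousOn g Ω) (hg0 : ∀ x ∈ Ω, 0 ≤ g x) {x0 : EuclideanSpace ℝ (Fin d)} {a b : ℝ}
    (hab : a ≤ b) (hB : closedBall x0 b ⊆ Ω) :
    IntegrableOn g (ball x0 b) ∧ ∫ x in ball x0 a, g x ≤ ∫ x in ball x0 b, g x := by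
  have hi : IntegrableOn g (ball x0 b) :=
    ((hg.mono hB).integrableOn_compact (isCompact_closedBall x0 b)).mono_set ball_subset_closedBall
  refine ⟨hi, ?_⟩
  apply setIntegral_mono_set hi
  · filter_upwards [ae_restrict_mem measurableSet_ball] with x hx
    exact hg0 x (hB (ball_subset_closedBall hx))
  · exact (ball_subset_ball hab).eventuallyLE

lemma phi_sandwich {d : ℕ} {Ω : Set (EuclideanSpace ℝ (Fin d))} {g φ : EuclideanSpace ℝ (Fin d) → ℝ}
    (hΩ : IsOpen Ω)
    (hg : ContinuousOn g Ω) (hg0 : ∀ x ∈ Ω, 0 ≤ g x) {x0 : EuclideanSpace ℝ (Fin d)} {R : ℝ}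
    (hR : 0 < R) (hφ : ContDiff ℝ 2 φ) (hφ0 : ∀ x, 0 ≤ φ x) (hφle : ∀ x, φ x ≤ 1)
    (hφ1 : ∀ x ∈ closedBall x0 (3 / 2 * R), φ x = 1) (hφz : ∀ x, x ∉ ball x0 (2 * R) → φ x = 0)
    (hts : tsupport φ ⊆ closedBall x0 (2 * R))
    (hB : closedBall x0 (2 * R) ⊆ Ω) :
    0 ≤ ∫ x, g x * φ x ∧
    ∫ x in ball x0 (3 / 2 * R), g x ≤ ∫ x, g x * φ x ∧
      ∫ x, g x * φ x ≤ ∫ x in ball x0 (2 * R), g x := by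
  have hc : HasCompactSupport φ :=
    (isCompact_closedBall x0 (2 * R)).of_isClosed_subset (isClosed_tsupport φ) hts
  have hi := (supp_cont hΩ hg hφ.continuous hc (hts.trans hB)).2
  have hi2 := (set_int_mono hg hg0 (le_refl (2 * R)) hB).1
  have hnn : ∀ x, 0 ≤ g x * φ x := by
    intro x
    by_cases hx : x ∈ Ω
    · exact mul_nonneg (hg0 x hx) (hφ0 x)
    · rw [image_eq_zero_of_notMem_tsupport fun h => hx (hB (hts h)), mul_zero]
  refine ⟨integral_nonneg hnn, ?_, ?_⟩
  · calc ∫ x in ball x0 (3 / 2 * R), g x = ∫ x in ball x0 (3 / 2 * R), g x * φ x := by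
          apply setIntegral_congr_fun measurableSet_ball
          intro x hx
          simp only
          rw [hφ1 x (ball_subset_closedBall hx), mul_one]
      _ ≤ _ := setIntegral_le_integral hi (Filter.Eventually.of_forall hnn)
  · rw [← setIntegral_eq_integral_of_forall_compl_eq_zero (s := ball x0 (2 * R))
      (fun x hx => by rw [hφz x hx, mul_zero])]
    apply setIntegral_mono_on hi.integrableOn hi2 measurableSet_ball
    intro x hx
    have := hg0 x (hB (ball_subset_closedBall hx))
    nlinarith [hφle x]

lemma l1_bound (d : ℕ) {m p : ℝ} (hm1 : m < 1) (hp : 1 ≤ p) : ∃ W : ℝ, 0 < W ∧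
    ∀ (Ω : Set (EuclideanSpace ℝ (Fin d))) (v : EuclideanSpace ℝ (Fin d) → ℝ)
    (_ : ContinuousOn v Ω) (_ : ∀ x ∈ Ω, 0 ≤ v x) (x0 : EuclideanSpace ℝ (Fin d)) (R : ℝ)
    (_ : 0 < R) (_ : closedBall x0 (2 * R) ⊆ Ω),
    R ^ (2 - d * (1 - m)) * (∫ x in ball x0 R, v x) ^ (1 - m) ≤
      W * (R ^ (2 - d * ((1 - m) / p)) * (∫ x in ball x0 (2 * R), v x ^ p) ^ ((1 - m) / p)) := by
  have hp0 : 0 < p := by linarith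
  have h1p : 1 / p ≤ 1 := by rw [div_le_one hp0]; exact hp
  have hω := vol_one_pos d
  set ω := volume.real (ball (0 : EuclideanSpace ℝ (Fin d)) 1)
  refine ⟨((1 ^ d * ω) ^ (1 - 1 / p)) ^ (1 - m), by positivity, ?_⟩
  intro Ω v hv hv0 x0 R hR hB
  have hvp : ContinuousOn (fun x => v x ^ p) Ω := hv.rpow_const fun x _ => Or.inr hp0.le
  have hvp0 : ∀ x ∈ Ω, 0 ≤ v x ^ p := fun x hx => Real.rpow_nonneg (hv0 x hx) _
  obtain ⟨hi, hle⟩ := set_int_mono hvp hvp0 (by linarith : R ≤ 2 * R) hB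
  have hsub : ball x0 R ⊆ ball x0 (2 * R) := ball_subset_ball (by linarith)
  have hΩR : ∀ x ∈ ball x0 R, x ∈ Ω := fun x hx => hB (ball_subset_closedBall (hsub hx))
  haveI : IsFiniteMeasure (volume.restrict (ball x0 R)) :=
      ⟨by rw [Measure.restrict_apply_univ]; exact measure_ball_lt_top⟩
  have hae : 0 ≤ᵐ[volume.restrict (ball x0 R)] fun x => v x ^ p := by
    filter_upwards [ae_restrict_mem measurableSet_ball] with x hx
    exact hvp0 x (hΩR x hx)
  obtain ⟨-, j⟩ := jensen_rpow (μ := volume.restrict (ball x0 R)) (s := fun x => v x ^ p) (β := 1 / p)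
    hae (hi.mono_set hsub) (by positivity) h1p
  have hVe : (volume.restrict (ball x0 R)).real univ = volume.real (ball x0 (1 * R)) := by
    simp [Measure.real]
  rw [hVe, vol_rpow d x0 one_pos hR] at j
  have he : ∫ x in ball x0 R, (v x ^ p) ^ (1 / p) = ∫ x in ball x0 R, v x := by
    apply setIntegral_congr_fun measurableSet_ball
    intro x hx
    simp only
    rw [← Real.rpow_mul (hv0 x (hΩR x hx)), mul_one_div_cancel hp0.ne', Real.rpow_one]
  rw [he] at j
  have hI0 : 0 ≤ ∫ x in ball x0 R, v x :=
    setIntegral_nonneg measurableSet_ball fun x hx => hv0 x (hΩR x hx)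
  have hJ0 : 0 ≤ ∫ x in ball x0 R, v x ^ p :=
    setIntegral_nonneg measurableSet_ball fun x hx => hvp0 x (hΩR x hx)
  set I := ∫ x in ball x0 R, v x
  set J := ∫ x in ball x0 (2 * R), v x ^ p
  set J1 := ∫ x in ball x0 R, v x ^ p
  have hJ1 : 0 ≤ J := hJ0.trans hle
  set A := (1 ^ d * ω) ^ (1 - 1 / p)
  have hA : 0 < A := by positivity
  have j2 : I ≤ J ^ (1 / p) * (A * R ^ (d * (1 - 1 / p))) := by
    refine j.trans ?_
    gcongr
  have j3 : I ^ (1 - m) ≤ (J ^ (1 / p) * (A * R ^ (d * (1 - 1 / p)))) ^ (1 - m) :=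
    Real.rpow_le_rpow hI0 j2 (by linarith)
  rw [Real.mul_rpow (by positivity) (by positivity), Real.mul_rpow (by positivity) (by positivity),
    ← Real.rpow_mul hJ1, ← Real.rpow_mul hR.le] at j3
  calc R ^ (2 - d * (1 - m)) * I ^ (1 - m) ≤ R ^ (2 - d * (1 - m)) *
        (J ^ (1 / p * (1 - m)) * (A ^ (1 - m) * R ^ (d * (1 - 1 / p) * (1 - m)))) := by gcongr
    _ = A ^ (1 - m) * ((R ^ (2 - d * (1 - m)) * R ^ (d * (1 - 1 / p) * (1 - m))) *
        J ^ (1 / p * (1 - m))) := by ring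
    _ = _ := by
      rw [← Real.rpow_add hR]
      have e1 : 2 - d * (1 - m) + d * (1 - 1 / p) * (1 - m) = 2 - d * ((1 - m) / p) := by
        field_simp; ring
      have e2 : 1 / p * (1 - m) = (1 - m) / p := by ring
      rw [e1, e2]

lemma ext_bound (d : ℕ) {m : ℝ} (hm0 : 0 < m) (hm1 : m < 1) : ∃ K1 : ℝ, 0 < K1 ∧
    ∀ (Ω : Set (EuclideanSpace ℝ (Fin d))) (_ : IsOpen Ω)
    (u : ℝ → EuclideanSpace ℝ (Fin d) → ℝ) (T : ℝ) (_ : IsFDESol m (Ioo 0 T ×ˢ Ω) u)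
    (_ : ContinuousOn (fun q : ℝ × EuclideanSpace ℝ (Fin d) => u q.1 q.2) (Icc 0 T ×ˢ Ω))
    (_ : ∀ x ∈ Ω, u T x = 0)
    (t₀ : ℝ) (_ : 0 ≤ t₀) (_ : t₀ < T) (_ : ContinuousOn (u t₀) Ω) (_ : ∀ x ∈ Ω, 0 ≤ u t₀ x)
    (x0 : EuclideanSpace ℝ (Fin d)) (R : ℝ)
    (_ : 0 < R) (_ : closedBall x0 (2 * R) ⊆ Ω),
    R ^ (2 - d * (1 - m)) * (∫ x in ball x0 R, u t₀ x) ^ (1 - m) ≤ K1 * (T - t₀) := by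
  obtain ⟨K, hK, hcut⟩ := cutoff d hm1
  have hω := vol_one_pos d
  set ω := volume.real (ball (0 : EuclideanSpace ℝ (Fin d)) 1)
  refine ⟨(1 - m) * K * (2 ^ d * ω) ^ (1 - m), ?_, ?_⟩
  · have : 0 < 1 - m := by linarith
    positivity
  intro Ω hΩ u T hu hc hT t₀ ht0 ht0T hcu hu0 x0 R hR hB
  obtain ⟨φ, hφ, hφ0, hφle, hφ1, hφz, hts, hlap⟩ := hcut x0 R hR
  have h1 := ext_raw hm0 hm1 hΩ hu hc hT ht0 ht0T hR hK hφ hφ0 hφ1 hφz hts hlap hB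
  obtain ⟨h2, h3, -⟩ := phi_sandwich hΩ hcu hu0 hR hφ hφ0 hφle hφ1 hφz hts hB
  have hsub : closedBall x0 (3 / 2 * R) ⊆ Ω := (closedBall_subset_closedBall (by linarith)).trans hB
  have h4 := (set_int_mono hcu hu0 (by linarith : R ≤ 3 / 2 * R) hsub).2
  rw [vol_rpow d x0 two_pos hR] at h1
  have hI0 : 0 ≤ ∫ x in ball x0 R, u t₀ x :=
    setIntegral_nonneg measurableSet_ball fun x hx => hu0 x (hB (closedBall_subset_closedBall
      (by linarith) (ball_subset_closedBall hx)))
  have h5 : (∫ x in ball x0 R, u t₀ x) ^ (1 - m) ≤ _ :=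
    (Real.rpow_le_rpow hI0 (h4.trans h3) (by linarith)).trans h1
  refine (mul_le_mul_of_nonneg_left h5 (by positivity)).trans (le_of_eq ?_)
  rw [Real.rpow_sub hR, Real.rpow_two]
  have : 0 < R ^ (d * (1 - m)) := by positivity
  field_simp
  simp only [ω]
  ring

lemma stab_bound (d : ℕ) {m p : ℝ} (hm0 : 0 < m) (hm1 : m < 1) (hp : 1 ≤ p) :
    ∃ h C : ℝ, 0 < h ∧ 0 < C ∧
    ∀ (Ω : Set (EuclideanSpace ℝ (Fin d))) (_ : IsOpen Ω)
    (u : ℝ → EuclideanSpace ℝ (Fin d) → ℝ) (T : ℝ) (_ : IsFDESol m (Ioo 0 T ×ˢ Ω) u)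
    (_ : ContinuousOn (fun q : ℝ × EuclideanSpace ℝ (Fin d) => u q.1 q.2) (Icc 0 T ×ˢ Ω))
    (_ : ∀ t ∈ Icc 0 T, ContinuousOn (u t) Ω) (_ : ∀ t ∈ Icc 0 T, ∀ x ∈ Ω, 0 ≤ u t x)
    (t₀ : ℝ) (_ : 0 ≤ t₀)
    (x0 : EuclideanSpace ℝ (Fin d)) (R : ℝ)
    (_ : 0 < R) (_ : closedBall x0 (2 * R) ⊆ Ω) (t : ℝ) (_ : t ∈ Icc t₀ T)
    (_ : t - t₀ ≤ h * (R ^ (2 - d * ((1 - m) / p)) *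
      (∫ x in ball x0 (2 * R), u t₀ x ^ p) ^ ((1 - m) / p))),
    ∫ x in ball x0 (3 / 2 * R), u t x ^ p ≤ C * ∫ x in ball x0 (2 * R), u t₀ x ^ p := by
  have hp0 : 0 < p := by linarith
  have hα0 : 0 < (1 - m) / p := div_pos (by linarith) hp0
  obtain ⟨K, hK, hcut⟩ := cutoff d (β := 1 - (1 - m) / p) (by linarith)
  have hω := vol_one_pos d
  set ω := volume.real (ball (0 : EuclideanSpace ℝ (Fin d)) 1)
  set α := (1 - m) / p with hα
  have hq : 0 < p + m - 1 := by linarith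
  set N := α * (p * m / (p + m - 1) * K * (2 ^ d * ω) ^ α) with hN
  have hNp : 0 < N := by positivity
  refine ⟨1 / N, 2 ^ (1 / α), by positivity, by positivity, ?_⟩
  intro Ω hΩ u T hu hc hcs hu0 t₀ ht0 x0 R hR hB t ht hle
  obtain ⟨φ, hφ, hφ0, hφle, hφ1, hφz, hts, hlap⟩ := hcut x0 R hR
  have h1 := stab_raw hm0 hm1 hp hΩ hu hc ht0 hR hK hφ hφ0 hφ1 hφz hts hlap hB ht
  have htI : t ∈ Icc 0 T := ⟨ht0.trans ht.1, ht.2⟩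
  have ht0I : t₀ ∈ Icc 0 T := ⟨ht0, ht.1.trans ht.2⟩
  have hv : ∀ s ∈ Icc 0 T, ContinuousOn (fun x => u s x ^ p) Ω := fun s hs =>
    (hcs s hs).rpow_const fun x _ => Or.inr hp0.le
  have hv0 : ∀ s ∈ Icc 0 T, ∀ x ∈ Ω, 0 ≤ u s x ^ p := fun s hs x hx => Real.rpow_nonneg (hu0 s hs x hx) _
  obtain ⟨a1, a2, a3⟩ := phi_sandwich hΩ (hv t htI) (hv0 t htI) hR hφ hφ0 hφle hφ1 hφz hts hB
  obtain ⟨b1, b2, b3⟩ := phi_sandwich hΩ (hv t₀ ht0I) (hv0 t₀ ht0I) hR hφ hφ0 hφle hφ1 hφz hts hB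
  rw [vol_rpow d x0 two_pos hR] at h1
  set J := ∫ x in ball x0 (2 * R), u t₀ x ^ p
  set Y := ∫ x, u t x ^ p * φ x
  set Y0 := ∫ x, u t₀ x ^ p * φ x
  have hJ : 0 ≤ J := b1.trans b3
  have h2 : Y ^ α ≤ 2 * J ^ α := by
    have h3 : Y0 ^ α ≤ J ^ α := Real.rpow_le_rpow b1 b3 hα0.le
    have h4 : α * (p * m / (p + m - 1) * (K / R ^ 2) * ((2 ^ d * ω) ^ α * R ^ (d * α))) * (t - t₀) ≤ J ^ α := by
      calc _ ≤ α * (p * m / (p + m - 1) * (K / R ^ 2) * ((2 ^ d * ω) ^ α * R ^ (d * α))) *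
          (1 / N * (R ^ (2 - d * α) * J ^ α)) := by gcongr
        _ = J ^ α := by
          rw [Real.rpow_sub hR, Real.rpow_two, hN]
          have : 0 < R ^ (d * α) := by positivity
          field_simp
    linarith
  have h5 : Y ≤ 2 ^ (1 / α) * J := by
    have h6 : (2 ^ (1 / α) * J) ^ α = 2 * J ^ α := by
      rw [Real.mul_rpow (by positivity) hJ, ← Real.rpow_mul (by norm_num), one_div_mul_cancel hα0.ne',
        Real.rpow_one]
    rw [← h6] at h2
    exact (Real.rpow_le_rpow_iff a1 (by positivity) hα0).1 h2
  exact a2.trans h5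

set_option maxHeartbeats 1000000 in
lemma grow (d : ℕ) (hd : 0 < d) {m p : ℝ} (hm0 : 0 < m) (hm1 : m < 1) (hp : 1 ≤ p) {C : ℝ}
    (hC : 0 < C) : ∃ K : ℝ, 0 < K ∧
    ∀ (Ω : Set (EuclideanSpace ℝ (Fin d))) (_ : IsOpen Ω)
    (u : ℝ → EuclideanSpace ℝ (Fin d) → ℝ) (T : ℝ) (_ : IsFDESol m (Ioo 0 T ×ˢ Ω) u)
    (x0 : EuclideanSpace ℝ (Fin d)) (R : ℝ) (_ : 0 < R) (_ : closedBall x0 (2 * R) ⊆ Ω)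
    (J t1 r τ M : ℝ) (x1 : EuclideanSpace ℝ (Fin d)) (_ : 0 < J) (_ : 0 < M) (_ : u t1 x1 = M)
    (_ : r = K * (J * M ^ (-p)) ^ (1 / (d : ℝ))) (_ : τ = M ^ (1 - m) * r ^ 2)
    (_ : Icc (t1 - τ) t1 ⊆ Ioo 0 T) (_ : closedBall x1 r ⊆ ball x0 (3 / 2 * R))
    (_ : ∀ s ∈ Icc (t1 - τ) t1, ∫ x in ball x0 (3 / 2 * R), u s x ^ p ≤ C * J),
    ∃ q ∈ Icc (t1 - τ) t1 ×ˢ closedBall x1 r, (3 / 2) ^ (1 / m) * M < u q.1 q.2 := by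
  obtain ⟨c, hc, hcyl⟩ := cyl d hd hm0 hm1
  set κ : ℝ := (1 / 2) ^ (1 / m) with hκ
  have hκp : 0 < κ := by positivity
  have hd0 : (d : ℝ) ≠ 0 := by exact_mod_cast hd.ne'
  refine ⟨(2 * C * κ ^ (-p) / c) ^ (1 / (d : ℝ)), by positivity, ?_⟩
  intro Ω hΩ u T hu x0 R hR hB J t1 r τ M x1 hJ hM hu1 hr hτ htime hball hint
  have hMp : 0 < M ^ (-p) := by positivity
  have hKp : 0 < 2 * C * κ ^ (-p) / c := by positivity
  have hrp : 0 < r := by rw [hr]; positivity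
  have hτp : 0 < τ := by rw [hτ]; positivity
  have hrd : r ^ d = (2 * C * κ ^ (-p) / c) * (J * M ^ (-p)) := by
    have hroot : ∀ z : ℝ, 0 ≤ z → (z ^ (1 / (d : ℝ))) ^ d = z := fun z hz => by
      rw [← Real.rpow_natCast, ← Real.rpow_mul hz, one_div_mul_cancel hd0, Real.rpow_one]
    rw [hr, mul_pow, hroot _ hKp.le, hroot _ (by positivity)]
  by_contra hcon
  push Not at hcon
  have h32 : ball x0 (3 / 2 * R) ⊆ Ω := (ball_subset_closedBall.trans
    (closedBall_subset_closedBall (by linarith))).trans hB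
  have hQ : Icc (t1 - τ) t1 ×ˢ closedBall x1 r ⊆ Ioo 0 T ×ˢ Ω :=
    Set.prod_mono htime (hball.trans h32)
  have hlow := hcyl Ω hΩ u T hu t1 r τ M x1 hrp hM hu1 hτ hQ hcon
  set S := (Icc (t1 - τ) t1 ×ˢ closedBall x1 r) ∩ {q | κ * M ≤ u q.1 q.2} with hS
  have hucont : ContinuousOn (fun q : ℝ × EuclideanSpace ℝ (Fin d) => u q.1 q.2) (Ioo 0 T ×ˢ Ω) :=
    hu.2.1.continuousOn
  have hSc : IsClosed S :=
    (hucont.mono hQ).preimage_isClosed_of_isClosed (isClosed_Icc.prod isClosed_closedBall)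
      (isClosed_Ici (a := κ * M))
  have hκM : 0 < (κ * M) ^ p := by positivity
  have hup : volume S ≤ ENNReal.ofReal (τ * (C * J / (κ * M) ^ p)) := by
    rw [Measure.volume_eq_prod, Measure.prod_apply hSc.measurableSet]
    calc ∫⁻ s, volume (Prod.mk s ⁻¹' S) ≤
        ∫⁻ s, (Icc (t1 - τ) t1).indicator (fun _ => ENNReal.ofReal (C * J / (κ * M) ^ p)) s := by
          apply lintegral_mono
          intro s
          by_cases hs : s ∈ Icc (t1 - τ) t1
          · rw [indicator_of_mem hs]
            have hsT := htime hs
            have hpos : ∀ x ∈ Ω, 0 < u s x := fun x hx => hu.1 (s, x) (Set.mk_mem_prod hsT hx)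
            have hcs : ContinuousOn (fun x => u s x ^ p) Ω :=
              (hucont.comp (f := fun x => (s, x)) (by fun_prop)
                fun x hx => Set.mk_mem_prod hsT hx).rpow_const
                fun x hx => Or.inr (by linarith)
            have hi := (set_int_mono hcs (fun x hx => (Real.rpow_pos_of_pos (hpos x hx) p).le)
              (le_refl (3 / 2 * R)) ((closedBall_subset_closedBall (by linarith)).trans hB)).1
            have hmk := mul_meas_ge_le_integral_of_nonneg (μ := volume.restrict (ball x0 (3 / 2 * R)))
              (f := fun x => u s x ^ p) (by
                filter_upwards [ae_restrict_mem measurableSet_ball] with x hx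
                exact (Real.rpow_pos_of_pos (hpos x (h32 hx)) p).le) hi ((κ * M) ^ p)
            have h1 : Prod.mk s ⁻¹' S ⊆ {x | (κ * M) ^ p ≤ u s x ^ p} ∩ ball x0 (3 / 2 * R) := by
              intro x hx
              have hx1 : (s, x) ∈ Icc (t1 - τ) t1 ×ˢ closedBall x1 r := hx.1
              have hx2 : κ * M ≤ u s x := hx.2
              exact ⟨Real.rpow_le_rpow (by positivity) hx2 (by linarith),
                hball (Set.mem_prod.1 hx1).2⟩
            refine (measure_mono h1).trans ?_
            rw [← Measure.restrict_apply' measurableSet_ball]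
            have hfin : volume.restrict (ball x0 (3 / 2 * R)) {x | (κ * M) ^ p ≤ u s x ^ p} ≠ ⊤ := by
              refine ne_of_lt (lt_of_le_of_lt (measure_mono (subset_univ _)) ?_)
              rw [Measure.restrict_apply_univ]; exact measure_ball_lt_top
            rw [ENNReal.le_ofReal_iff_toReal_le hfin (by positivity), le_div_iff₀ hκM]
            have h2 := hmk.trans (hint s hs)
            unfold Measure.real at h2
            linarith
          · rw [indicator_of_notMem hs]
            have : Prod.mk s ⁻¹' S = ∅ := by
              rw [eq_empty_iff_forall_notMem]
              intro x hx
              have hx1 : (s, x) ∈ Icc (t1 - τ) t1 ×ˢ closedBall x1 r := hx.1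
              exact hs (Set.mem_prod.1 hx1).1
            change volume (Prod.mk s ⁻¹' S) ≤ 0
            rw [this]; simp
      _ = _ := by
          rw [lintegral_indicator measurableSet_Icc, setLIntegral_const, Real.volume_Icc,
            sub_sub_cancel, mul_comm, ← ENNReal.ofReal_mul hτp.le]
  have h := hlow.trans hup
  rw [ENNReal.ofReal_le_ofReal_iff (by positivity), hrd, Real.mul_rpow hκp.le hM.le,
    Real.rpow_neg hκp.le, Real.rpow_neg hM.le] at h
  have e1 : c * (τ * (2 * C * (κ ^ p)⁻¹ / c * (J * (M ^ p)⁻¹))) = 2 * (τ * (C * J / (κ ^ p * M ^ p))) := by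
    field_simp
  rw [e1] at h
  have : 0 < τ * (C * J / (κ ^ p * M ^ p)) := by positivity
  linarith

/-- Abstract doubling argument. -/
lemma doubling {E : Type*} [PseudoMetricSpace E] {u : ℝ → E → ℝ} {L e1 e2 r0 τ0 M1 S ρ B t : ℝ} {x : E}
    (hL : 1 < L) (he1 : 0 < e1) (he2 : 0 < e2) (hr0 : 0 ≤ r0) (hτ0 : 0 ≤ τ0) (hM1 : 0 < M1)
    (hρ : r0 / (1 - L ^ (-e1)) ≤ ρ) (hS : τ0 / (1 - L ^ (-e2)) ≤ S)
    (hB : ∀ s ∈ Icc (t - S) t, ∀ y ∈ closedBall x ρ, u s y ≤ B)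
    (hstep : ∀ s ∈ Icc (t - S) t, ∀ y ∈ closedBall x ρ, M1 ≤ u s y →
      ∃ s' ∈ Icc (s - τ0 * (u s y / M1) ^ (-e2)) s, ∃ y' ∈ closedBall y (r0 * (u s y / M1) ^ (-e1)),
        L * u s y < u s' y') : u t x < M1 := by
  by_contra hcon
  push Not at hcon
  set a := L ^ (-e1) with ha
  set b := L ^ (-e2) with hb
  have hL0 : 0 < L := by linarith
  have ha0 : 0 < a := by positivity
  have hb0 : 0 < b := by positivity
  have ha1 : a < 1 := Real.rpow_lt_one_of_one_lt_of_neg hL (by linarith)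
  have hb1 : b < 1 := Real.rpow_lt_one_of_one_lt_of_neg hL (by linarith)
  have key : ∀ k : ℕ, ∃ s y, t - τ0 * (1 - b ^ k) / (1 - b) ≤ s ∧ s ≤ t ∧
      dist y x ≤ r0 * (1 - a ^ k) / (1 - a) ∧ L ^ k * M1 ≤ u s y := by
    intro k
    induction k with
    | zero => exact ⟨t, x, by simp, le_rfl, by simp, by simpa using hcon⟩
    | succ k ih =>
      obtain ⟨s, y, h1, h2, h3, h4⟩ := ih
      have hLk : 1 ≤ L ^ k := one_le_pow₀ hL.le
      have hbs : τ0 * (1 - b ^ k) / (1 - b) ≤ S := by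
        refine le_trans ?_ hS
        have : 0 < 1 - b := by linarith
        have : 0 < b ^ k := by positivity
        gcongr
        nlinarith
      have has : r0 * (1 - a ^ k) / (1 - a) ≤ ρ := by
        refine le_trans ?_ hρ
        have : 0 < 1 - a := by linarith
        have : 0 < a ^ k := by positivity
        gcongr
        nlinarith
      have hM : M1 ≤ u s y := le_trans (by nlinarith) h4
      obtain ⟨s', hs', y', hy', h5⟩ := hstep s ⟨by linarith, h2⟩ y (by rw [mem_closedBall]; linarith) hM
      have hq : L ^ k ≤ u s y / M1 := by rw [le_div_iff₀ hM1]; exact h4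
      have hpw : ∀ e : ℝ, 0 < e → (u s y / M1) ^ (-e) ≤ (L ^ (-e)) ^ k := by
        intro e he
        have : (L ^ (-e)) ^ k = (L ^ k) ^ (-e) := by
          rw [← Real.rpow_natCast, ← Real.rpow_natCast, ← Real.rpow_mul hL0.le, ← Real.rpow_mul hL0.le,
            mul_comm]
        rw [this]
        exact Real.rpow_le_rpow_of_nonpos (by positivity) hq (by linarith)
      refine ⟨s', y', ?_, hs'.2.trans h2, ?_, ?_⟩
      · have h6 : τ0 * (u s y / M1) ^ (-e2) ≤ τ0 * b ^ k := by gcongr; exact hpw e2 he2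
        have h7 : τ0 * (1 - b ^ (k + 1)) / (1 - b) = τ0 * (1 - b ^ k) / (1 - b) + τ0 * b ^ k := by
          have : 1 - b ≠ 0 := by linarith
          field_simp; ring
        rw [h7]; linarith [hs'.1]
      · have h6 : r0 * (u s y / M1) ^ (-e1) ≤ r0 * a ^ k := by gcongr; exact hpw e1 he1
        have h7 : r0 * (1 - a ^ (k + 1)) / (1 - a) = r0 * (1 - a ^ k) / (1 - a) + r0 * a ^ k := by
          have : 1 - a ≠ 0 := by linarith
          field_simp; ring
        rw [h7]
        rw [mem_closedBall] at hy'
        linarith [dist_triangle y' y x]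
      · rw [pow_succ]
        nlinarith
  obtain ⟨k, hk⟩ := pow_unbounded_of_one_lt (B / M1) hL
  obtain ⟨s, y, h1, h2, h3, h4⟩ := key k
  have hbs : τ0 * (1 - b ^ k) / (1 - b) ≤ S := by
    refine le_trans ?_ hS
    have : 0 < 1 - b := by linarith
    have : 0 < b ^ k := by positivity
    gcongr
    nlinarith
  have has : r0 * (1 - a ^ k) / (1 - a) ≤ ρ := by
    refine le_trans ?_ hρ
    have : 0 < 1 - a := by linarith
    have : 0 < a ^ k := by positivity
    gcongr
    nlinarith
  have := hB s ⟨by linarith, h2⟩ y (by rw [mem_closedBall]; linarith)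
  rw [div_lt_iff₀ hM1] at hk
  linarith

lemma scal1 {K A θ J d p m D M1 r0 τ0 R : ℝ} (hK : 0 < K) (hA : 0 < A) (hθ : 0 < θ) (hJ : 0 < J)
    (hR : 0 < R) (hd : 0 < d) (hp : 0 < p) (hD0 : 0 < D) (hD : D = 2 * p - d * (1 - m))
    (hM1 : M1 = A * θ ^ (-(d / D)) * J ^ (2 / D)) (hr0 : r0 = K * (J * M1 ^ (-p)) ^ (1 / d))
    (hτ0 : τ0 = M1 ^ (1 - m) * r0 ^ 2) (hθR : θ ≤ R ^ (2 - d * ((1 - m) / p)) * J ^ ((1 - m) / p)) :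
    τ0 = K ^ 2 * A ^ (-(D / d)) * θ ∧ r0 ≤ K * A ^ (-(p / d)) * R := by
  have hr1 : r0 = K * A ^ (-(p / d)) * (θ ^ (p / D) * J ^ (-((1 - m) / D))) := by
    rw [hr0, hM1]
    obtain ⟨a, rfl⟩ : ∃ a, A = Real.exp a := ⟨Real.log A, (Real.exp_log hA).symm⟩
    obtain ⟨b, rfl⟩ : ∃ a, θ = Real.exp a := ⟨Real.log θ, (Real.exp_log hθ).symm⟩
    obtain ⟨c, rfl⟩ : ∃ a, J = Real.exp a := ⟨Real.log J, (Real.exp_log hJ).symm⟩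
    rw [mul_assoc K (Real.exp a ^ (-(p / d)))]
    congr 1
    simp only [← Real.exp_mul, ← Real.exp_add]
    congr 1
    have : 1 - m = (2 * p - D) / d := by rw [hD]; field_simp; ring
    rw [this]
    field_simp
    ring
  constructor
  · have hm : 1 - m = (2 * p - D) / d := by rw [hD]; field_simp; ring
    rw [hτ0, hr1, hM1, hm]
    have h2 : ∀ x y : ℝ, (K * x * y) ^ 2 = K ^ 2 * (x * y * (x * y)) := fun x y => by ring
    rw [h2]
    obtain ⟨a, rfl⟩ : ∃ a, A = Real.exp a := ⟨Real.log A, (Real.exp_log hA).symm⟩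
    obtain ⟨b, rfl⟩ : ∃ a, θ = Real.exp a := ⟨Real.log θ, (Real.exp_log hθ).symm⟩
    obtain ⟨c, rfl⟩ : ∃ a, J = Real.exp a := ⟨Real.log J, (Real.exp_log hJ).symm⟩
    rw [mul_left_comm, mul_assoc (K ^ 2)]
    congr 1
    simp only [← Real.exp_mul, ← Real.exp_add]
    congr 1
    field_simp
    ring
  · rw [hr1]
    have h1 : θ ^ (p / D) ≤ (R ^ (2 - d * ((1 - m) / p)) * J ^ ((1 - m) / p)) ^ (p / D) :=
      Real.rpow_le_rpow hθ.le hθR (by positivity)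
    have h2 : (R ^ (2 - d * ((1 - m) / p)) * J ^ ((1 - m) / p)) ^ (p / D) * J ^ (-((1 - m) / D)) = R := by
      obtain ⟨b, rfl⟩ : ∃ a, R = Real.exp a := ⟨Real.log R, (Real.exp_log hR).symm⟩
      obtain ⟨c, rfl⟩ : ∃ a, J = Real.exp a := ⟨Real.log J, (Real.exp_log hJ).symm⟩
      have hm : 1 - m = (2 * p - D) / d := by rw [hD]; field_simp; ring
      simp only [← Real.exp_mul, ← Real.exp_add]
      congr 1
      rw [hm]
      field_simp
      ring
    have h3 : θ ^ (p / D) * J ^ (-((1 - m) / D)) ≤ R := by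
      rw [← h2]
      gcongr
    gcongr

lemma scal2 {K J d p m D M1 M r0 τ0 : ℝ} (hJ : 0 < J) (hd : 0 < d)
    (hM1 : 0 < M1) (hM : 0 < M) (hD : D = 2 * p - d * (1 - m))
    (hr0 : r0 = K * (J * M1 ^ (-p)) ^ (1 / d)) (hτ0 : τ0 = M1 ^ (1 - m) * r0 ^ 2) :
    r0 * (M / M1) ^ (-(p / d)) = K * (J * M ^ (-p)) ^ (1 / d) ∧
    τ0 * (M / M1) ^ (-(D / d)) = M ^ (1 - m) * (r0 * (M / M1) ^ (-(p / d))) ^ 2 := by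
  constructor
  · rw [hr0, mul_assoc]
    congr 1
    obtain ⟨a, rfl⟩ : ∃ a, M = Real.exp a := ⟨Real.log M, (Real.exp_log hM).symm⟩
    obtain ⟨b, rfl⟩ : ∃ a, M1 = Real.exp a := ⟨Real.log M1, (Real.exp_log hM1).symm⟩
    obtain ⟨c, rfl⟩ : ∃ a, J = Real.exp a := ⟨Real.log J, (Real.exp_log hJ).symm⟩
    simp only [← Real.exp_mul, ← Real.exp_add, ← Real.exp_sub]
    congr 1
    field_simp
    ring
  · rw [hτ0, hD]
    have h2 : ∀ x y : ℝ, (x * y) ^ 2 = x ^ 2 * (y * y) := fun x y => by ring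
    rw [h2, mul_left_comm, mul_comm (M1 ^ (1 - m)), mul_assoc]
    congr 1
    obtain ⟨a, rfl⟩ : ∃ a, M = Real.exp a := ⟨Real.log M, (Real.exp_log hM).symm⟩
    obtain ⟨b, rfl⟩ : ∃ a, M1 = Real.exp a := ⟨Real.log M1, (Real.exp_log hM1).symm⟩
    simp only [← Real.exp_mul, ← Real.exp_add, ← Real.exp_sub]
    congr 1
    field_simp
    ring

lemma pickA {K e1 e2 β1 β2 : ℝ} (he1 : 0 < e1) (he2 : 0 < e2) (h1 : 0 < β1) (h2 : 0 < β2) :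
    ∃ A : ℝ, 0 < A ∧ K * A ^ (-e1) ≤ β1 ∧ K ^ 2 * A ^ (-e2) ≤ β2 := by
  have t1 := (tendsto_rpow_neg_atTop he1).const_mul K
  have t2 := (tendsto_rpow_neg_atTop he2).const_mul (K ^ 2)
  rw [mul_zero] at t1 t2
  obtain ⟨A, h⟩ := ((Filter.eventually_gt_atTop 0).and
    ((t1.eventually_le_const h1).and (t2.eventually_le_const h2))).exists
  exact ⟨A, h.1, h.2.1, h.2.2⟩

set_option maxHeartbeats 1000000 in
lemma smoothing (d : ℕ) (hd : 0 < d) {m p : ℝ} (hm0 : 0 < m) (hm1 : m < 1) (hp : 1 ≤ p)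
    (hD : 0 < 2 * p - d * (1 - m)) : ∃ h A : ℝ, 0 < h ∧ 0 < A ∧
    ∀ (Ω : Set (EuclideanSpace ℝ (Fin d))) (_ : IsOpen Ω)
    (u : ℝ → EuclideanSpace ℝ (Fin d) → ℝ) (T : ℝ) (_ : IsFDESol m (Ioo 0 T ×ˢ Ω) u)
    (_ : ContinuousOn (fun q : ℝ × EuclideanSpace ℝ (Fin d) => u q.1 q.2) (Icc 0 T ×ˢ Ω))
    (_ : ∀ t ∈ Icc 0 T, ContinuousOn (u t) Ω)
    (_ : ∀ t ∈ Icc 0 T, ∀ x ∈ Ω, 0 ≤ u t x) (t₀ : ℝ) (_ : 0 ≤ t₀)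
    (x0 : EuclideanSpace ℝ (Fin d)) (R : ℝ) (_ : 0 < R) (_ : closedBall x0 (2 * R) ⊆ Ω)
    (J : ℝ) (_ : J = ∫ x in ball x0 (2 * R), u t₀ x ^ p) (_ : 0 < J)
    (t : ℝ) (_ : t₀ < t) (_ : t < T)
    (_ : t - t₀ ≤ h * (R ^ (2 - d * ((1 - m) / p)) * J ^ ((1 - m) / p)))
    (x : EuclideanSpace ℝ (Fin d)) (_ : x ∈ ball x0 R),
    u t x ≤ A * (t - t₀) ^ (-(d / (2 * p - d * (1 - m)))) * J ^ (2 / (2 * p - d * (1 - m))) := by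
  obtain ⟨h, C, hh, hC, hstab⟩ := stab_bound d hm0 hm1 hp
  obtain ⟨K, hK, hgrow⟩ := grow d hd hm0 hm1 hp hC
  have hd0 : (0 : ℝ) < d := by exact_mod_cast hd
  have hp0 : 0 < p := by linarith
  obtain ⟨D, hDD⟩ : ∃ D : ℝ, D = 2 * p - d * (1 - m) := ⟨_, rfl⟩
  rw [← hDD] at hD ⊢
  obtain ⟨L, hLdef⟩ : ∃ L : ℝ, L = (3 / 2) ^ (1 / m) := ⟨_, rfl⟩
  rw [← hLdef] at hgrow
  have hL : 1 < L := by rw [hLdef]; exact Real.one_lt_rpow (by norm_num) (by positivity)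
  have he1 : 0 < p / d := by positivity
  have he2 : 0 < D / d := by positivity
  have ha1 : 0 < 1 - L ^ (-(p / d)) := by
    linarith [Real.rpow_lt_one_of_one_lt_of_neg hL (by linarith : -(p / d) < 0)]
  have hb1 : 0 < 1 - L ^ (-(D / d)) := by
    linarith [Real.rpow_lt_one_of_one_lt_of_neg hL (by linarith : -(D / d) < 0)]
  have ha2 : L ^ (-(p / d)) > 0 := by positivity
  have hb2 : L ^ (-(D / d)) > 0 := by positivity
  obtain ⟨A, hA, hA1, hA2⟩ := pickA (K := K) he1 he2
    (β1 := (1 - L ^ (-(p / d))) / 4) (β2 := (1 - L ^ (-(D / d))) / 4) (by linarith) (by linarith)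
  refine ⟨min h 1, A, by positivity, hA, ?_⟩
  intro Ω hΩ u T hu huc hus hun t₀ ht₀ x0 R hR hB J hJdef hJ t ht htT hθ x hx
  have hG : 0 < R ^ (2 - d * ((1 - m) / p)) * J ^ ((1 - m) / p) := by positivity
  have hθ1 : t - t₀ ≤ R ^ (2 - d * ((1 - m) / p)) * J ^ ((1 - m) / p) :=
    hθ.trans (by nlinarith [min_le_right h 1])
  have hθ2 : t - t₀ ≤ h * (R ^ (2 - d * ((1 - m) / p)) * J ^ ((1 - m) / p)) :=
    hθ.trans (by gcongr; exact min_le_left h 1)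
  have hθp : 0 < t - t₀ := by linarith
  obtain ⟨M1, hM1⟩ : ∃ M1, M1 = A * (t - t₀) ^ (-(d / D)) * J ^ (2 / D) := ⟨_, rfl⟩
  rw [← hM1]
  have hM1p : 0 < M1 := by rw [hM1]; positivity
  obtain ⟨r0, hr0⟩ : ∃ r0, r0 = K * (J * M1 ^ (-p)) ^ (1 / (d : ℝ)) := ⟨_, rfl⟩
  obtain ⟨τ0, hτ0⟩ : ∃ τ0, τ0 = M1 ^ (1 - m) * r0 ^ 2 := ⟨_, rfl⟩
  have hr0p : 0 < r0 := by rw [hr0]; positivity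
  have hτ0p : 0 < τ0 := by rw [hτ0]; positivity
  obtain ⟨hs1, hs2⟩ := scal1 hK hA hθp hJ hR hd0 hp0 hD hDD hM1 hr0 hτ0 hθ1
  have hr4 : r0 ≤ (1 - L ^ (-(p / d))) / 4 * R := hs2.trans (by gcongr)
  have hτ4 : τ0 ≤ (1 - L ^ (-(D / d))) / 4 * (t - t₀) := by rw [hs1]; gcongr
  have hr5 : r0 ≤ R / 4 := by nlinarith
  have hτ5 : τ0 ≤ (t - t₀) / 4 := by nlinarith
  rw [mem_ball] at hx
  have hsubO : closedBall x (R / 4) ⊆ Ω := fun y hy => hB (by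
    rw [mem_closedBall] at *; linarith [dist_triangle y x x0])
  have hQ : Icc (t - (t - t₀) / 4) t ×ˢ closedBall x (R / 4) ⊆ Ioo 0 T ×ˢ Ω :=
    Set.prod_mono (fun s hs => ⟨by linarith [hs.1], by linarith [hs.2]⟩) hsubO
  obtain ⟨B, hBd⟩ := ((isCompact_Icc (a := t - (t - t₀) / 4) (b := t)).prod
    (isCompact_closedBall x (R / 4))).bddAbove_image (hu.2.1.continuousOn.mono hQ)
  refine (doubling (E := EuclideanSpace ℝ (Fin d)) (u := u) (L := L) (e1 := p / d) (e2 := D / d)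
    (r0 := r0) (τ0 := τ0) (S := (t - t₀) / 4) (ρ := R / 4) (B := B) hL he1 he2 hr0p.le hτ0p.le hM1p
    ?_ ?_ ?_ ?_).le
  · rw [div_le_iff₀ ha1]; linarith
  · rw [div_le_iff₀ hb1]; linarith
  · intro s hs y hy
    exact hBd ⟨(s, y), Set.mk_mem_prod hs hy, rfl⟩
  · intro s hs y hy hM
    have hMp : 0 < u s y := by linarith
    obtain ⟨hq1, hq2⟩ := scal2 (D := D) hJ hd0 hM1p hMp hDD hr0 hτ0
    have hone : 1 ≤ u s y / M1 := by rw [le_div_iff₀ hM1p]; linarith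
    have hr6 : r0 * (u s y / M1) ^ (-(p / d)) ≤ R / 4 := by
      have := Real.rpow_le_one_of_one_le_of_nonpos hone (by linarith : -(p / d) ≤ 0)
      nlinarith
    have hτ6 : τ0 * (u s y / M1) ^ (-(D / d)) ≤ (t - t₀) / 4 := by
      have := Real.rpow_le_one_of_one_le_of_nonpos hone (by linarith : -(D / d) ≤ 0)
      nlinarith
    rw [mem_closedBall] at hy
    have hs1 := hs.1
    have hs2 := hs.2
    obtain ⟨q, hq, hqL⟩ := hgrow Ω hΩ u T hu x0 R hR hB J s (r0 * (u s y / M1) ^ (-(p / d)))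
      (τ0 * (u s y / M1) ^ (-(D / d))) (u s y) y hJ hMp rfl hq1 hq2
      (fun σ hσ => ⟨by linarith [hσ.1], by linarith [hσ.2]⟩)
      (fun z hz => by
        rw [mem_closedBall] at hz
        rw [mem_ball]
        linarith [dist_triangle z y x0, dist_triangle y x x0])
      (fun σ hσ => by
        have hσ1 := hσ.1
        have hσ2 := hσ.2
        rw [hJdef]
        refine hstab Ω hΩ u T hu huc hus hun t₀ ht₀ x0 R hR hB σ ⟨by linarith, by linarith⟩ ?_
        rw [← hJdef]
        linarith)
    exact ⟨q.1, (Set.mem_prod.1 hq).1, q.2, (Set.mem_prod.1 hq).2, hqL⟩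

/-- **Theorem 5.3: alternative form of the Harnack inequality.** Here `m_c = (d-2)/d`,
`p_c = d(1-m)/2`, `ϑ_p = 1/(2p - d(1-m))`, and
`t_*(t₀) = h₂ R^{2-d(1-m)} ‖u(t₀,·)‖_{L¹(B_R)}^{1-m}`. The supremum over the ball is
expressed pointwise and the infimum as `sInf` of the image of the ball. -/
theorem alternative_harnack
    (d : ℕ) (hd : 3 ≤ d) (m : ℝ) (hm0 : 0 < m) (hm1 : m < 1) (p : ℝ)
    (hp₁ : (d - 2 : ℝ) / d < m → p = 1)
    (hp₂ : m ≤ (d - 2 : ℝ) / d → d * (1 - m) / 2 < p) :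
    ∃ C₁ C₂ h₂ : ℝ, 0 < C₁ ∧ 0 < C₂ ∧ 0 < h₂ ∧
      ∀ (Ω : Set (EuclideanSpace ℝ (Fin d))), IsOpen Ω →
      ∀ (u : ℝ → EuclideanSpace ℝ (Fin d) → ℝ) (u₀ : EuclideanSpace ℝ (Fin d) → ℝ) (T : ℝ),
        0 < T →
        IsFDESol m (Ioo 0 T ×ˢ Ω) u →
        (∀ x ∈ Ω, 0 ≤ u₀ x) →
        LocallyIntegrableOn (fun x => u₀ x ^ p) Ω →
        TakesInit T Ω u u₀ →
        ExtinctAt T Ω u →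
      ∀ (x₀ : EuclideanSpace ℝ (Fin d)) (R : ℝ), 0 < R →
        closedBall x₀ (6 * R) ⊆ Ω →
      ∀ t₀ : ℝ, 0 ≤ t₀ → t₀ < T →
        0 < ∫ x in ball x₀ R, u t₀ x →
      ∀ t ϑ : ℝ, 0 ≤ ϑ → t₀ < t - ϑ →
        t + ϑ < t₀ + h₂ * R ^ (2 - d * (1 - m)) * (∫ x in ball x₀ R, u t₀ x) ^ (1 - m) →
      ∀ x ∈ ball x₀ R,
        u t x ≤
          C₁ * (t - t₀) ^ (-(d * (1 / (2 * p - d * (1 - m))))) *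
            ((∫ y in ball x₀ (2 * R), u t₀ y ^ p) ^ (1 / p)) ^
              (2 * p / (2 * p - d * (1 - m))) +
          C₂ * ((∫ y in ball x₀ R, u t₀ y ^ p) ^ (1 / p) * R ^ (d : ℝ) /
              ((∫ y in ball x₀ R, u t₀ y) * R ^ ((d : ℝ) / p))) ^ (1 / m) *
            sInf (u (t + ϑ) '' ball x₀ R) ∧
        u t x ≤
          C₁ * (t - t₀) ^ (-(d * (1 / (2 * p - d * (1 - m))))) *
            ((∫ y in ball x₀ (2 * R), u t₀ y ^ p) ^ (1 / p)) ^
              (2 * p / (2 * p - d * (1 - m))) +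
          C₂ * ((∫ y in ball x₀ R, u t₀ y ^ p) ^ (1 / p) * R ^ (d : ℝ) /
              ((∫ y in ball x₀ R, u t₀ y) * R ^ ((d : ℝ) / p))) ^ (1 / m) *
            sInf (u (t - ϑ) '' ball x₀ R) := by
  have hd0 : (0 : ℝ) < d := by
    have : 0 < d := by omega
    exact_mod_cast this
  have hpD : 1 ≤ p ∧ 0 < 2 * p - d * (1 - m) := by
    rcases lt_or_ge ((d - 2 : ℝ) / d) m with h | h
    · have h1 := hp₁ h
      rw [div_lt_iff₀ hd0] at h
      subst h1
      exact ⟨le_rfl, by linarith⟩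
    · have h1 := hp₂ h
      rw [le_div_iff₀ hd0] at h
      exact ⟨by linarith, by linarith⟩
  obtain ⟨hp, hD⟩ := hpD
  have hp0 : 0 < p := by linarith
  obtain ⟨W, hW, hl1⟩ := l1_bound d (m := m) (p := p) hm1 hp
  obtain ⟨K1, hK1, hext⟩ := ext_bound d hm0 hm1
  obtain ⟨h, A, hh, hA, hsm⟩ := smoothing d (by omega) hm0 hm1 hp hD
  refine ⟨A, 1, min (h / W) (1 / K1), hA, one_pos, by positivity, ?_⟩
  intro Ω hΩ u u₀ T hT hu hu₀ _ hinit hex x₀ R hR hB6 t₀ ht₀ ht₀T hN t ϑ hϑ ht1 ht2 x hx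
  have hB : closedBall x₀ (2 * R) ⊆ Ω :=
    (closedBall_subset_closedBall (by linarith)).trans hB6
  have hBR : ball x₀ R ⊆ Ω := (ball_subset_closedBall.trans
    (closedBall_subset_closedBall (by linarith))).trans hB
  have huc : ContinuousOn (fun q : ℝ × EuclideanSpace ℝ (Fin d) => u q.1 q.2) (Icc 0 T ×ˢ Ω) := by
    intro q hq
    obtain ⟨hq1, hq2⟩ := Set.mem_prod.1 hq
    rcases lt_or_ge q.1 T with hqT | hqT
    · have h1 := hinit.1 q (Set.mk_mem_prod ⟨hq1.1, hqT⟩ hq2)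
      refine h1.mono_of_mem_nhdsWithin ?_
      have hn : {z : ℝ × EuclideanSpace ℝ (Fin d) | z.1 < T} ∈ nhds q :=
        (isOpen_lt continuous_fst continuous_const).mem_nhds hqT
      filter_upwards [self_mem_nhdsWithin, mem_nhdsWithin_of_mem_nhds hn] with z hz hz2
      exact Set.mk_mem_prod ⟨(Set.mem_prod.1 hz).1.1, hz2⟩ (Set.mem_prod.1 hz).2
    · have hq0 : 0 < q.1 := by linarith
      have h1 := hex.1 q (Set.mk_mem_prod ⟨hq0, hq1.2⟩ hq2)
      refine h1.mono_of_mem_nhdsWithin ?_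
      have hn : {z : ℝ × EuclideanSpace ℝ (Fin d) | 0 < z.1} ∈ nhds q :=
        (isOpen_lt continuous_const continuous_fst).mem_nhds hq0
      filter_upwards [self_mem_nhdsWithin, mem_nhdsWithin_of_mem_nhds hn] with z hz hz2
      exact Set.mk_mem_prod ⟨hz2, (Set.mem_prod.1 hz).1.2⟩ (Set.mem_prod.1 hz).2
  have hus : ∀ t ∈ Icc 0 T, ContinuousOn (u t) Ω := fun s hs =>
    huc.comp (f := fun x => (s, x)) (by fun_prop) fun x hx => Set.mk_mem_prod hs hx
  have hun : ∀ t ∈ Icc 0 T, ∀ x ∈ Ω, 0 ≤ u t x := by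
    intro s hs y hy
    rcases eq_or_lt_of_le hs.1 with h0 | h0
    · rw [← h0, hinit.2 y hy]; exact hu₀ y hy
    rcases eq_or_lt_of_le hs.2 with h1 | h1
    · rw [h1, hex.2.1 y hy]
    · exact (hu.1 (s, y) (Set.mk_mem_prod ⟨h0, h1⟩ hy)).le
  have ht₀I : t₀ ∈ Icc 0 T := ⟨ht₀, ht₀T.le⟩
  have e1 := hext Ω hΩ u T hu huc hex.2.1 t₀ ht₀ ht₀T (hus t₀ ht₀I) (hun t₀ ht₀I) x₀ R hR hB
  have e2 := hl1 Ω (u t₀) (hus t₀ ht₀I) (hun t₀ ht₀I) x₀ R hR hB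
  have hX : 0 < R ^ (2 - d * (1 - m)) * (∫ x in ball x₀ R, u t₀ x) ^ (1 - m) := by positivity
  have hJ0 : 0 ≤ ∫ y in ball x₀ (2 * R), u t₀ y ^ p :=
    setIntegral_nonneg measurableSet_ball fun y hy =>
      Real.rpow_nonneg (hun t₀ ht₀I y (hB (ball_subset_closedBall hy))) p
  have hJ : 0 < ∫ y in ball x₀ (2 * R), u t₀ y ^ p := by
    rcases eq_or_lt_of_le hJ0 with h0 | h0
    · exfalso
      rw [← h0, Real.zero_rpow (div_ne_zero (by linarith) hp0.ne'), mul_zero, mul_zero] at e2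
      linarith
    · exact h0
  have hmul : ∀ c : ℝ, min (h / W) (1 / K1) ≤ c →
      t + ϑ - t₀ < c * (R ^ (2 - d * (1 - m)) * (∫ x in ball x₀ R, u t₀ x) ^ (1 - m)) := by
    intro c hc
    have := mul_le_mul_of_nonneg_right hc hX.le
    rw [mul_assoc] at ht2
    linarith
  have hT2 : t + ϑ < T := by
    have h1 := hmul (1 / K1) (min_le_right _ _)
    have h2 : 1 / K1 * (R ^ (2 - d * (1 - m)) * (∫ x in ball x₀ R, u t₀ x) ^ (1 - m)) ≤ T - t₀ := by
      rw [one_div, inv_mul_le_iff₀ hK1]; exact e1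
    linarith
  have hθ : t - t₀ ≤ h * (R ^ (2 - d * ((1 - m) / p)) *
      (∫ y in ball x₀ (2 * R), u t₀ y ^ p) ^ ((1 - m) / p)) := by
    have h1 := hmul (h / W) (min_le_left _ _)
    have h2 : h / W * (R ^ (2 - d * (1 - m)) * (∫ x in ball x₀ R, u t₀ x) ^ (1 - m)) ≤
        h / W * (W * (R ^ (2 - d * ((1 - m) / p)) *
          (∫ y in ball x₀ (2 * R), u t₀ y ^ p) ^ ((1 - m) / p))) := by gcongr
    rw [← mul_assoc (h / W) W, div_mul_cancel₀ _ hW.ne'] at h2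
    linarith
  have hmain := hsm Ω hΩ u T hu huc hus hun t₀ ht₀ x₀ R hR hB _ rfl hJ t (by linarith) (by linarith)
    hθ x hx
  have hfirst : ((∫ y in ball x₀ (2 * R), u t₀ y ^ p) ^ (1 / p)) ^ (2 * p / (2 * p - d * (1 - m))) =
      (∫ y in ball x₀ (2 * R), u t₀ y ^ p) ^ (2 / (2 * p - d * (1 - m))) := by
    rw [← Real.rpow_mul hJ0]
    congr 1
    field_simp
  rw [hfirst, mul_one_div]
  have hsec : ∀ s ∈ Ioo 0 T, 0 ≤ 1 * ((∫ y in ball x₀ R, u t₀ y ^ p) ^ (1 / p) * R ^ (d : ℝ) /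
              ((∫ y in ball x₀ R, u t₀ y) * R ^ ((d : ℝ) / p))) ^ (1 / m) *
            sInf (u s '' ball x₀ R) := by
    intro s hs
    have h1 : 0 ≤ sInf (u s '' ball x₀ R) := by
      apply Real.sInf_nonneg
      rintro _ ⟨y, hy, rfl⟩
      exact hun s ⟨hs.1.le, hs.2.le⟩ y (hBR hy)
    have h2 : 0 ≤ ∫ y in ball x₀ R, u t₀ y ^ p :=
      setIntegral_nonneg measurableSet_ball fun y hy =>
        Real.rpow_nonneg (hun t₀ ht₀I y (hBR hy)) p
    positivity
  have hA1 := hsec (t + ϑ) ⟨by linarith, hT2⟩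
  have hA2 := hsec (t - ϑ) ⟨by linarith, by linarith⟩
  exact ⟨by linarith, by linarith⟩
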